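/- arXiv:1710.04680 — 5 statements merged into one kernel-verified Lean document; each statement's English description precedes it below -/
import Mathlib

section
/- Let k ≥ 4 be an even integer and let n ≥ k. Then there exist three permutations σ₁, σ₂, σ₃ in the symmetric group Σ_n, each of order exactly k, such that the subgroup they generate is all of Σ_n. -/
open Equiv Equiv.Perm MulAction Pointwise in
theorem aux_prim {α : Type*} (S : Set (Perm α))
    (ht : IsPretransitive (Subgroup.closure S) α) (a : α) (M : Set α)
    (hM : ∀ B : Set α, IsBlock (Subgroup.closure S) B → a ∈ B → (∃ y ∈ B, y ≠ a) → M ⊆ B)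
    (hS : ∀ g ∈ S, ∃ x ∈ M, g x ∈ M) : IsPreprimitive (Subgroup.closure S) α := by
  refine IsPreprimitive.of_isTrivialBlock_base (G := Subgroup.closure S) a ?_
  intro B haB hB
  by_cases hne : ∃ y ∈ B, y ≠ a
  · right
    have hMB := hM B hB haB hne
    rw [isBlock_iff_smul_eq_of_mem] at hB
    have key : ∀ g ∈ Subgroup.closure S, (g : Perm α) • B = B := by
      have : Subgroup.closure S ≤ MulAction.stabilizer (Perm α) B := by
        rw [Subgroup.closure_le]
        intro g hg
        obtain ⟨x, hx, hgx⟩ := hS g hg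
        exact hB (g := ⟨g, Subgroup.subset_closure hg⟩) (hMB hx) (hMB hgx)
      intro g hg
      exact this hg
    ext y
    simp only [Set.mem_univ, iff_true]
    obtain ⟨g, rfl⟩ := exists_smul_eq (Subgroup.closure S) a y
    have := key g g.2
    rw [← this]
    exact Set.smul_mem_smul_set (a := (g : Perm α)) haB
  · left
    push Not at hne
    intro x hx y hy
    rw [hne x hx, hne y hy]

open Equiv Equiv.Perm MulAction Pointwise in
theorem aux_swap {α : Type*} [Finite α] [DecidableEq α] (S : Set (Perm α))
    (ht : IsPretransitive (Subgroup.closure S) α) (a b : α) (hab : a ≠ b)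
    (hs : swap a b ∈ Subgroup.closure S)
    (hS : ∀ g ∈ S, ∃ x ∈ ({a, b} : Set α), g x ∈ ({a, b} : Set α)) :
    Subgroup.closure S = ⊤ := by
  refine subgroup_eq_top_of_isPreprimitive_of_isSwap_mem ?_ (swap a b) ⟨a, b, hab, rfl⟩ hs
  refine aux_prim S ht a {a, b} ?_ hS
  rintro B hB ha ⟨y, hy, hya⟩
  have hb : b ∈ B := by
    by_cases hyb : y = b
    · exact hyb ▸ hy
    rw [isBlock_iff_smul_eq_of_mem] at hB
    have h1 := hB (g := ⟨swap a b, hs⟩) hy (by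
      change swap a b y ∈ B
      rwa [swap_apply_of_ne_of_ne hya hyb])
    rw [← h1]
    exact ⟨a, ha, swap_apply_left a b⟩
  rintro x (rfl | rfl) <;> assumption

open Equiv Equiv.Perm MulAction Pointwise in
theorem aux_three {α : Type*} [Fintype α] [DecidableEq α] (S : Set (Perm α))
    (ht : IsPretransitive (Subgroup.closure S) α) (a b c : α) (hab : a ≠ b) (hac : a ≠ c)
    (hbc : b ≠ c)
    (hs : swap a b * swap a c ∈ Subgroup.closure S)
    (hS : ∀ g ∈ S, ∃ x ∈ ({a, b, c} : Set α), g x ∈ ({a, b, c} : Set α))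
    (hodd : ∃ g ∈ S, sign g = -1) :
    Subgroup.closure S = ⊤ := by
  have hA : alternatingGroup α ≤ Subgroup.closure S := by
    refine alternatingGroup_le_of_isPreprimitive_of_isThreeCycle_mem ?_
      (isThreeCycle_swap_mul_swap_same hab hac hbc) hs
    refine aux_prim S ht a {a, b, c} ?_ hS
    rintro B hB ha ⟨y, hy, hya⟩
    rw [isBlock_iff_smul_eq_of_mem] at hB
    have ea : (swap a b * swap a c) a = c := by
      simp [swap_apply_of_ne_of_ne hac.symm hbc.symm]
    have ec : (swap a b * swap a c) c = b := by simp
    have eb : (swap a b * swap a c) b = a := by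
      simp [swap_apply_of_ne_of_ne hab.symm hbc]
    have h1 : (⟨swap a b * swap a c, hs⟩ : Subgroup.closure S) • B = B := by
      by_cases hyb : y = b
      · subst hyb
        exact hB hy (by change (swap a y * swap a c) y ∈ B; rwa [eb])
      by_cases hyc : y = c
      · subst hyc
        exact hB ha (by change (swap a b * swap a y) a ∈ B; rwa [ea])
      · exact hB hy (by
          change (swap a b * swap a c) y ∈ B
          simpa [swap_apply_of_ne_of_ne hya hyb, swap_apply_of_ne_of_ne hya hyc] using hy)
    have hc : c ∈ B := by rw [← h1]; exact ⟨a, ha, ea⟩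
    have hb : b ∈ B := by rw [← h1]; exact ⟨c, hc, ec⟩
    rintro x (rfl | rfl | rfl) <;> assumption
  obtain ⟨s, hs, hso⟩ := hodd
  have hsm := Subgroup.subset_closure hs
  rw [eq_top_iff]
  intro g _
  rcases Int.units_eq_one_or (sign g) with h | h
  · exact hA (mem_alternatingGroup.2 h)
  · have : g * s ∈ Subgroup.closure S := hA (mem_alternatingGroup.2 (by simp [h, hso]))
    simpa using (Subgroup.mul_mem_cancel_right _ hsm).1 this

open Equiv Equiv.Perm MulAction Pointwise in
theorem aux_trans {n : ℕ} (G : Subgroup (Perm (Fin n)))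
    (h : ∀ i (hi : i + 1 < n), ∃ g ∈ G, ((g ⟨i, by omega⟩ : Fin n) : ℕ) = i + 1) :
    IsPretransitive G (Fin n) := by
  rcases Nat.eq_zero_or_pos n with rfl | hn
  · exact ⟨fun x => x.elim0⟩
  refine (isPretransitive_iff_orbit_eq_univ (G := G) (⟨0, hn⟩ : Fin n)).2 ?_
  have : ∀ i (hi : i < n), (⟨i, hi⟩ : Fin n) ∈ orbit G (⟨0, hn⟩ : Fin n) := by
    intro i
    induction i with
    | zero => intro hi; exact mem_orbit_self _
    | succ i ih =>
      intro hi
      obtain ⟨g, hg, hgi⟩ := h i hi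
      have h2 : (⟨i + 1, hi⟩ : Fin n) = (⟨g, hg⟩ : G) • (⟨i, by omega⟩ : Fin n) :=
        Fin.ext hgi.symm
      rw [h2]
      exact (mem_orbit_of_mem_orbit (⟨g, hg⟩ : G) (ih (by omega)))
  ext x
  simp only [Set.mem_univ, iff_true]
  exact this x.1 x.2

open Equiv Equiv.Perm in
theorem aux_cyc {n : ℕ} (a b : ℕ) (hab : a < b) (hb : b < n) :
    ∃ c : Perm (Fin n), orderOf c = b - a + 1 ∧ sign c = (-1) ^ (b - a) ∧
      (∀ x : Fin n, (x : ℕ) < a → c x = x) ∧ (∀ x : Fin n, b < (x : ℕ) → c x = x) ∧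
      (∀ x : Fin n, a ≤ (x : ℕ) → (x : ℕ) < b → (c x : ℕ) = x + 1) := by
  have : NeZero n := ⟨by omega⟩
  have hlt : (⟨a, by omega⟩ : Fin n) < ⟨b, hb⟩ := hab
  refine ⟨Fin.cycleIcc ⟨a, by omega⟩ ⟨b, hb⟩, ?_, ?_, ?_, ?_, ?_⟩
  · rw [← lcm_cycleType, Fin.cycleType_cycleIcc_of_lt hlt]
    simp
  · rw [Fin.sign_cycleIcc_of_le hlt.le]
  · intro x hx
    exact Fin.cycleIcc_of_lt hx
  · intro x hx
    exact Fin.cycleIcc_of_gt hx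
  · intro x hx hx'
    rw [Fin.cycleIcc_of_ge_of_lt (Fin.le_def.2 hx) (Fin.lt_def.2 hx')]
    exact Fin.val_add_one_of_lt' (by omega)

open Equiv Equiv.Perm in
theorem aux_tail (n c : ℕ) :
    ∃ t : Perm (Fin n), t * t = 1 ∧ (∀ x : Fin n, (x : ℕ) < c → t x = x) ∧
      (n ≤ c + 1 → t = 1) ∧
      (∀ x : Fin n, c ≤ (x : ℕ) → (x : ℕ) + 1 < n → ((x : ℕ) - c) % 2 = 0 →
        (t x : ℕ) = x + 1) := by
  let f : Fin n → Fin n := fun i =>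
    if (i : ℕ) < c then i else if ((i : ℕ) - c) % 2 = 0 then
      (if h : (i : ℕ) + 1 < n then ⟨i + 1, h⟩ else i) else ⟨i - 1, by omega⟩
  have hf : Function.Involutive f := by
    intro i
    simp only [f]
    ext
    split_ifs <;> simp at * <;> omega
  refine ⟨hf.toPerm, ?_, ?_, ?_, ?_⟩
  · ext x
    exact congrArg Fin.val (hf x)
  · intro x hx
    change f x = x
    simp [f, hx]
  · intro h
    ext x
    change (f x : ℕ) = x
    have := x.2
    simp only [f]
    split_ifs <;> simp <;> omega
  · intro x h1 h2 h3
    change (f x : ℕ) = x + 1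
    simp [f, h2, h3, not_lt.2 h1]

open Equiv Equiv.Perm in
theorem aux_order {α : Type*} [Finite α] {k : ℕ} (hke : Even k) (c t : Perm α)
    (hc : orderOf c = k) (ht : t * t = 1) (hd : c.Disjoint t) : orderOf (c * t) = k := by
  rw [hd.orderOf, hc]
  apply Nat.lcm_eq_left
  exact (orderOf_dvd_of_pow_eq_one (by rw [pow_two, ht])).trans hke.two_dvd

open Equiv Equiv.Perm in
/-- For any even `k ≥ 4` and `n ≥ k`, the symmetric group on `n` symbols is
generated by three elements of order exactly `k`. -/
theorem symmetric_group_generated_by_three_elements_of_even_order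
    (k n : ℕ) (hk : 4 ≤ k) (hke : Even k) (hn : k ≤ n) :
    ∃ σ₁ σ₂ σ₃ : Equiv.Perm (Fin n),
      orderOf σ₁ = k ∧ orderOf σ₂ = k ∧ orderOf σ₃ = k ∧
      Subgroup.closure {σ₁, σ₂, σ₃} = ⊤ := by
  obtain ⟨c, hc, hcs, -, hcgt, hcm⟩ := aux_cyc (n := n) 0 (k - 1) (by omega) (by omega)
  rcases Nat.lt_or_ge n (2 * k - 1) with hlt | hge
  · obtain ⟨d, hd, -, hdlt, -, hdm⟩ := aux_cyc (n := n) (n - k) (n - 1) (by omega) (by omega)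
    let p0 : Fin n := ⟨0, by omega⟩
    let p1 : Fin n := ⟨1, by omega⟩
    let p2 : Fin n := ⟨2, by omega⟩
    have h01 : p0 ≠ p1 := by simp [p0, p1]
    have h02 : p0 ≠ p2 := by simp [p0, p2]
    have h12 : p1 ≠ p2 := by simp [p1, p2]
    have c0 : c p0 = p1 := Fin.ext (hcm p0 (by omega) (by simp [p0]; omega))
    have c1 : c p1 = p2 := Fin.ext (hcm p1 (by omega) (by simp [p1]; omega))
    refine ⟨c, swap p0 p1 * c * swap p0 p1, d, by omega, ?_, by omega, ?_⟩
    · have : orderOf (swap p0 p1 * c * (swap p0 p1)⁻¹) = orderOf c :=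
        orderOf_injective (MulAut.conj (swap p0 p1)).toMonoidHom
          (MulAut.conj (swap p0 p1)).injective c
      rw [swap_inv] at this
      omega
    · apply aux_three _ _ p1 p0 p2 h01.symm h12 h02
      · have e : swap p1 p0 * swap p1 p2 = (swap p0 p1 * c * swap p0 p1) * c⁻¹ := by
          have : swap p1 p2 = c * swap p0 p1 * c⁻¹ := by
            rw [← c0, ← c1, c0, ← c0, swap_apply_apply]
          rw [this, swap_comm p1 p0]
          simp only [mul_assoc]
        rw [e]
        exact mul_mem (Subgroup.subset_closure (by simp))
          (inv_mem (Subgroup.subset_closure (by simp)))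
      · rintro g (rfl | rfl | rfl)
        · exact ⟨p0, by simp, by simp [c0]⟩
        · refine ⟨p0, by simp, ?_⟩
          simp [c1, swap_apply_of_ne_of_ne h02.symm h12.symm]
        · refine ⟨p0, by simp, ?_⟩
          by_cases h : n - k = 0
          · have : g p0 = p1 := Fin.ext (hdm p0 (by omega) (by simp [p0]; omega))
            simp [this]
          · have : g p0 = p0 := hdlt p0 (by simp [p0]; omega)
            simp [this]
      · refine ⟨c, by simp, ?_⟩
        rw [hcs]
        exact Odd.neg_one_pow (by obtain ⟨r, rfl⟩ := hke; exact ⟨r - 1, by omega⟩)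
      · apply aux_trans
        intro i hi
        by_cases h : i < k - 1
        · exact ⟨c, Subgroup.subset_closure (by simp), hcm _ (by simp) h⟩
        · exact ⟨d, Subgroup.subset_closure (by simp), hdm _ (by simp; omega) (by simp; omega)⟩
  · obtain ⟨d, hd, -, hdlt, hdgt, hdm⟩ :=
      aux_cyc (n := n) (k - 1) (2 * k - 2) (by omega) (by omega)
    obtain ⟨s, hs2, hslt, -, hsm⟩ := aux_tail n (2 * k - 2)
    obtain ⟨t, ht2, htlt, -, htm⟩ := aux_tail n (2 * k - 1)
    let p0 : Fin n := ⟨k, by omega⟩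
    let p1 : Fin n := ⟨k + 1, by omega⟩
    have h01 : p0 ≠ p1 := by simp [p0, p1]
    have hcs : c.Disjoint s := by
      intro x
      by_cases h : (x : ℕ) < 2 * k - 2
      · exact Or.inr (hslt x h)
      · exact Or.inl (hcgt x (by omega))
    have hdt : d.Disjoint t := by
      intro x
      by_cases h : (x : ℕ) < 2 * k - 1
      · exact Or.inr (htlt x h)
      · exact Or.inl (hdgt x (by omega))
    have o1 := aux_order hke c s (by omega) hs2 hcs
    have o3 := aux_order hke d t (by omega) ht2 hdt
    have hdis : (c * s).Disjoint (swap p0 p1) := by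
      have hfix : ∀ x : Fin n, k ≤ (x : ℕ) → (x : ℕ) < 2 * k - 2 → (c * s) x = x := by
        intro x h1 h2
        rw [Perm.mul_apply, hslt x h2, hcgt x (by omega)]
      intro x
      by_cases hx0 : x = p0
      · subst hx0; exact Or.inl (hfix _ (by simp [p0]) (by simp [p0]; omega))
      by_cases hx1 : x = p1
      · subst hx1; exact Or.inl (hfix _ (by simp [p1]) (by simp [p1]; omega))
      · exact Or.inr (swap_apply_of_ne_of_ne hx0 hx1)
    have f0 : (c * s) p0 = p0 := (hdis p0).resolve_right (by simp [h01.symm])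
    have f1 : (c * s) p1 = p1 := (hdis p1).resolve_right (by simp [h01])
    refine ⟨c * s, c * s * swap p0 p1, d * t, o1,
      aux_order hke _ _ o1 (swap_mul_self _ _) hdis, o3, ?_⟩
    apply aux_swap _ _ p0 p1 h01
    · have e : swap p0 p1 = (c * s)⁻¹ * (c * s * swap p0 p1) := by group
      have hm : (c * s)⁻¹ * (c * s * swap p0 p1) ∈
          Subgroup.closure {c * s, c * s * swap p0 p1, d * t} :=
        mul_mem (inv_mem (Subgroup.subset_closure (by simp)))
          (Subgroup.subset_closure (by simp))
      rwa [← e] at hm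
    · rintro g (rfl | rfl | rfl)
      · exact ⟨p0, by simp, by rw [f0]; simp⟩
      · refine ⟨p0, by simp, ?_⟩
        rw [Perm.mul_apply, swap_apply_left, f1]
        simp
      · refine ⟨p0, by simp, ?_⟩
        have : (d * t) p0 = p1 := by
          rw [Perm.mul_apply, htlt p0 (by simp [p0]; omega)]
          exact Fin.ext (hdm p0 (by simp [p0]) (by simp [p0]; omega))
        rw [this]; simp
    · apply aux_trans
      intro i hi
      by_cases h1 : i < k - 1
      · refine ⟨c * s, Subgroup.subset_closure (by simp), ?_⟩
        rw [Perm.mul_apply, hslt _ (by simp; omega)]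
        exact hcm _ (by simp) h1
      by_cases h2 : i < 2 * k - 2
      · refine ⟨d * t, Subgroup.subset_closure (by simp), ?_⟩
        rw [Perm.mul_apply, htlt _ (by simp; omega)]
        exact hdm _ (by simp; omega) h2
      by_cases h3 : (i - (2 * k - 2)) % 2 = 0
      · refine ⟨c * s, Subgroup.subset_closure (by simp), ?_⟩
        have := hsm ⟨i, by omega⟩ (by simp; omega) hi h3
        rw [Perm.mul_apply, hcgt _ (by simp only [this]; omega)]
        exact this
      · refine ⟨d * t, Subgroup.subset_closure (by simp), ?_⟩
        have := htm ⟨i, by omega⟩ (by simp; omega) hi (by simp; omega)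
        rw [Perm.mul_apply, hdgt _ (by simp only [this]; omega)]
        exact this
end

section
/- Let k ≥ 3 be an odd integer and let n ≥ k. Then there exist three permutations σ₁, σ₂, σ₃ in the alternating group A_n, each of order exactly k, such that the subgroup they generate is all of A_n. -/
open Equiv

/-- Rotation by `j` inside `m` consecutive blocks of length `k` starting at `s`. -/
def blockRot (k s m j x : ℕ) : ℕ :=
  if s ≤ x ∧ x < s + m * k then s + k * ((x - s) / k) + ((x - s) % k + j) % k else x

lemma blockRot_of_not {k s m j x : ℕ} (h : ¬ (s ≤ x ∧ x < s + m * k)) :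
    blockRot k s m j x = x := by simp [blockRot, h]

lemma blockRot_form {k s m j a b : ℕ} (ha : a < m) (hb : b < k) :
    blockRot k s m j (s + (k * a + b)) = s + (k * a + (b + j) % k) := by
  have h1 : k * a + b < m * k := by nlinarith
  have h2 : (k * a + b) / k = a := by
    rw [Nat.mul_add_div (by omega), Nat.div_eq_of_lt hb]; rfl
  have h3 : (k * a + b) % k = b := by
    rw [Nat.mul_add_mod, Nat.mod_eq_of_lt hb]
  unfold blockRot
  rw [if_pos (by omega), Nat.add_sub_cancel_left, h2, h3, add_assoc]

lemma block_cases (k s m x : ℕ) (hk : 0 < k) :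
    ¬ (s ≤ x ∧ x < s + m * k) ∨ ∃ a b, a < m ∧ b < k ∧ x = s + (k * a + b) := by
  by_cases h : s ≤ x ∧ x < s + m * k
  · right
    refine ⟨(x - s) / k, (x - s) % k, ?_, Nat.mod_lt _ hk, ?_⟩
    · rw [Nat.div_lt_iff_lt_mul hk]; omega
    · rw [Nat.div_add_mod]; omega
  · exact Or.inl h

lemma blockRot_comp (k s m i j x : ℕ) (hk : 0 < k) :
    blockRot k s m i (blockRot k s m j x) = blockRot k s m (j + i) x := by
  rcases block_cases k s m x hk with h | ⟨a, b, ha, hb, rfl⟩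
  · rw [blockRot_of_not h, blockRot_of_not h, blockRot_of_not h]
  · rw [blockRot_form ha hb, blockRot_form ha (Nat.mod_lt _ hk), blockRot_form ha hb]
    simp [add_assoc]

lemma blockRot_self (k s m x : ℕ) (hk : 0 < k) : blockRot k s m k x = x := by
  rcases block_cases k s m x hk with h | ⟨a, b, ha, hb, rfl⟩
  · rw [blockRot_of_not h]
  · rw [blockRot_form ha hb]; simp [Nat.mod_eq_of_lt hb]

lemma blockRot_zero (k s m x : ℕ) (hk : 0 < k) : blockRot k s m 0 x = x := by
  rcases block_cases k s m x hk with h | ⟨a, b, ha, hb, rfl⟩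
  · rw [blockRot_of_not h]
  · rw [blockRot_form ha hb]; simp [Nat.mod_eq_of_lt hb]

lemma blockRot_lt {k s m j x n : ℕ} (hk : 0 < k) (hn : s + m * k ≤ n) (hx : x < n) :
    blockRot k s m j x < n := by
  rcases block_cases k s m x hk with h | ⟨a, b, ha, hb, rfl⟩
  · rwa [blockRot_of_not h]
  · rw [blockRot_form ha hb]
    have := Nat.mod_lt (b + j) hk
    nlinarith

lemma blockRot_one_le (k s m x : ℕ) (hk : 0 < k) : blockRot k s m 1 x ≤ x + 1 := by
  rcases block_cases k s m x hk with h | ⟨a, b, ha, hb, rfl⟩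
  · rw [blockRot_of_not h]; omega
  · rw [blockRot_form ha hb]
    have := Nat.mod_le (b + 1) k
    omega

lemma blockRot_one_succ {k s m x : ℕ} (hk : 0 < k) (hs : s ≤ x) (hx : x < s + m * k)
    (hm : (x + 1 - s) % k ≠ 0) : blockRot k s m 1 x = x + 1 := by
  rcases block_cases k s m x hk with h | ⟨a, b, ha, hb, rfl⟩
  · exact absurd ⟨hs, hx⟩ h
  · rw [blockRot_form ha hb]
    have e : s + (k * a + b) + 1 - s = k * a + (b + 1) := by omega
    rw [e, Nat.mul_add_mod] at hm
    have : b + 1 ≠ k := by rintro h; simp [h] at hm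
    rw [Nat.mod_eq_of_lt (by omega)]; omega

/-- The permutation of `Fin n` given by rotating blocks. -/
def rotPerm (k s m n : ℕ) (hk : 0 < k) (hn : s + m * k ≤ n) : Perm (Fin n) where
  toFun x := ⟨blockRot k s m 1 x, blockRot_lt hk hn x.2⟩
  invFun x := ⟨blockRot k s m (k - 1) x, blockRot_lt hk hn x.2⟩
  left_inv x := by
    ext
    simp only [blockRot_comp _ _ _ _ _ _ hk]
    rw [show 1 + (k - 1) = k by omega, blockRot_self _ _ _ _ hk]
  right_inv x := by
    ext
    simp only [blockRot_comp _ _ _ _ _ _ hk]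
    rw [show (k - 1) + 1 = k by omega, blockRot_self _ _ _ _ hk]

lemma rotPerm_val (k s m n : ℕ) (hk : 0 < k) (hn : s + m * k ≤ n) (x : Fin n) :
    (rotPerm k s m n hk hn x : ℕ) = blockRot k s m 1 x := rfl

lemma rotPerm_pow (k s m n : ℕ) (hk : 0 < k) (hn : s + m * k ≤ n) (j : ℕ) (x : Fin n) :
    (((rotPerm k s m n hk hn) ^ j) x : ℕ) = blockRot k s m j x := by
  induction j with
  | zero => simp [blockRot_zero _ _ _ _ hk]
  | succ j ih =>
    rw [pow_succ', Perm.mul_apply, rotPerm_val, ih, blockRot_comp _ _ _ _ _ _ hk]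

lemma rotPerm_order (k s m n : ℕ) (hk : 0 < k) (hm : 0 < m) (hn : s + m * k ≤ n) :
    orderOf (rotPerm k s m n hk hn) = k := by
  rw [orderOf_eq_iff hk]
  constructor
  · ext x
    rw [rotPerm_pow, blockRot_self _ _ _ _ hk]; rfl
  · intro j hj hj0 h
    have hs : s < n := by nlinarith
    have h1 := rotPerm_pow k s m n hk hn j ⟨s, hs⟩
    have h2 := blockRot_form (k := k) (s := s) (j := j) hm hk
    simp only [mul_zero, add_zero, zero_add, Nat.mod_eq_of_lt hj] at h2
    rw [h, h2] at h1
    simp at h1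
    omega

lemma mem_alternating_of_order {n k : ℕ} (hko : Odd k) (σ : Perm (Fin n))
    (h : orderOf σ = k) : σ ∈ alternatingGroup (Fin n) := by
  rw [Perm.mem_alternatingGroup]
  have h1 : (Perm.sign σ) ^ k = 1 := by rw [← map_pow, ← h, pow_orderOf_eq_one, map_one]
  rcases Int.units_eq_one_or (Perm.sign σ) with h2 | h2
  · exact h2
  · rw [h2, hko.neg_one_pow] at h1
    exact absurd h1 (by decide)

/-- The three-cycle `a → b → c → a`. -/
def cyc {α : Type*} [DecidableEq α] (a b c : α) : Perm α := swap a b * swap b c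

lemma cyc_conj {α : Type*} [DecidableEq α] (g : Perm α) (a b c : α) :
    g * cyc a b c * g⁻¹ = cyc (g a) (g b) (g c) := by
  unfold cyc
  rw [Equiv.swap_apply_apply, Equiv.swap_apply_apply]
  group

lemma cyc_rot {α : Type*} [DecidableEq α] {a b c : α} (hab : a ≠ b) (hbc : b ≠ c) (hac : a ≠ c) :
    cyc a b c = cyc b c a := by
  ext x; simp only [cyc, Perm.mul_apply, swap_apply_def]; grind

lemma cyc_inv {α : Type*} [DecidableEq α] (a b c : α) :
    (cyc a b c)⁻¹ = cyc c b a := by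
  simp [cyc, swap_comm]

lemma cyc_apply {α : Type*} [DecidableEq α] {a b c : α} (hab : a ≠ b) (hbc : b ≠ c) (hac : a ≠ c) :
    cyc a b c a = b ∧ cyc a b c b = c ∧ cyc a b c c = a := by
  simp only [cyc, Perm.mul_apply, swap_apply_def]; grind

/-- All three-cycles on the points below `t` lie in `G`. -/
def AllCyc {n : ℕ} (G : Subgroup (Perm (Fin n))) (t : ℕ) : Prop :=
  ∀ a b c : Fin n, a.val < t → b.val < t → c.val < t → a ≠ b → b ≠ c → a ≠ c → cyc a b c ∈ G

lemma conj_mem' {α : Type*} [DecidableEq α] {G : Subgroup (Perm α)} {g : Perm α} (hg : g ∈ G)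
    {a b c : α} (h : cyc a b c ∈ G) : cyc (g a) (g b) (g c) ∈ G := by
  rw [← cyc_conj]; exact G.mul_mem (G.mul_mem hg h) (G.inv_mem hg)

lemma inv_mem' {α : Type*} [DecidableEq α] {G : Subgroup (Perm α)}
    {a b c : α} (hab : a ≠ b) (hbc : b ≠ c) (hac : a ≠ c) (h : cyc a b c ∈ G) : cyc b a c ∈ G := by
  have := G.inv_mem h
  rw [cyc_inv, cyc_rot hbc.symm hab.symm hac.symm] at this
  exact this

lemma allCyc_step {n : ℕ} {G : Subgroup (Perm (Fin n))} {t : ℕ} (hP : AllCyc G t)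
    (x y z : Fin n) (hx : x.val < t) (hy : y.val < t) (hz : z.val = t) (hxy : x ≠ y)
    (h : cyc x y z ∈ G) : AllCyc G (t + 1) := by
  have ne : ∀ a : Fin n, a.val < t → a ≠ z := by rintro a ha rfl; omega
  have sym : ∀ a b : Fin n, a.val < t → b.val < t → a ≠ b → cyc a b z ∈ G → cyc b a z ∈ G :=
    fun a b ha hb hab h => inv_mem' hab (ne b hb) (ne a ha) h
  have move : ∀ a b c : Fin n, a.val < t → b.val < t → c.val < t → a ≠ b → b ≠ c → a ≠ c →
      cyc a b z ∈ G → cyc b c z ∈ G := by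
    intro a b c ha hb hc hab hbc hac h
    have h1 := conj_mem' (hP a b c ha hb hc hab hbc hac) h
    obtain ⟨e1, e2, -⟩ := cyc_apply hab hbc hac
    have e3 : cyc a b c z = z := by
      have := ne a ha; have := ne b hb; have := ne c hc
      simp only [cyc, Perm.mul_apply, swap_apply_def]; grind
    rwa [e1, e2, e3] at h1
  have all : ∀ a b : Fin n, a.val < t → b.val < t → a ≠ b → cyc a b z ∈ G := by
    intro a b ha hb hab
    have h' := sym x y hx hy hxy h
    by_cases hax : a = x
    · subst hax
      by_cases hby : b = y
      · subst hby; exact h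
      · exact move y a b hy hx hb hxy.symm hab (Ne.symm hby) h'
    · by_cases hay : a = y
      · subst hay
        by_cases hbx : b = x
        · subst hbx; exact h'
        · exact move x a b hx hy hb hxy hab (Ne.symm hbx) h
      · have h1 := move x y a hx hy ha hxy (Ne.symm hay) (Ne.symm hax) h
        by_cases hby : b = y
        · subst hby; exact sym b a hb ha hab.symm h1
        · exact move y a b hy ha hb (Ne.symm hay) hab (Ne.symm hby) h1
  intro a b c ha hb hc hab hbc hac
  have key : ∀ a : Fin n, a.val < t + 1 → a ≠ z → a.val < t := by
    intro a ha h
    have : a.val ≠ z.val := fun h' => h (Fin.ext h')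
    omega
  by_cases haz : a = z
  · subst haz
    rw [cyc_rot hab hbc hac]
    exact all b c (key b hb hab.symm) (key c hc hac.symm) hbc
  · by_cases hbz : b = z
    · subst hbz
      rw [cyc_rot hab hbc hac, cyc_rot hbc hac.symm hab.symm]
      exact all c a (key c hc hbc.symm) (key a ha hab) hac.symm
    · by_cases hcz : c = z
      · subst hcz
        exact all a b (key a ha hac) (key b hb hbc) hab
      · exact hP a b c (key a ha haz) (key b hb hbz) (key c hc hcz) hab hbc hac

lemma allCyc_three {n : ℕ} (hn : 3 ≤ n) {G : Subgroup (Perm (Fin n))}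
    (h : cyc (⟨0, by omega⟩ : Fin n) ⟨1, by omega⟩ ⟨2, by omega⟩ ∈ G) : AllCyc G 3 := by
  refine allCyc_step (t := 2) ?_ _ _ _ (by simp) (by simp) rfl (by simp) h
  intro a b c ha hb hc hab hbc hac
  exfalso
  rw [Ne, Fin.ext_iff] at hab hbc hac
  omega

lemma generates {n : ℕ} (hn : 3 ≤ n) {G : Subgroup (Perm (Fin n))}
    (h : cyc (⟨0, by omega⟩ : Fin n) ⟨1, by omega⟩ ⟨2, by omega⟩ ∈ G)
    (hg : ∀ t, 3 ≤ t → t < n → ∃ g ∈ G, (∀ x : Fin n, (g x : ℕ) ≤ x + 1) ∧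
      ∀ x : Fin n, x.val + 1 = t → (g x : ℕ) = t) : alternatingGroup (Fin n) ≤ G := by
  have all : ∀ t, 3 ≤ t → t ≤ n → AllCyc G t := by
    intro t ht
    induction t, ht using Nat.le_induction with
    | base => intro _; exact allCyc_three hn h
    | succ t ht ih =>
      intro htn
      have hP := ih (by omega)
      obtain ⟨g, hgG, h1, h2⟩ := hg t ht (by omega)
      have h0 := h1 ⟨0, by omega⟩
      have h0' := h1 ⟨1, by omega⟩
      have hm := conj_mem' hgG (hP ⟨0, by omega⟩ ⟨1, by omega⟩ ⟨t - 1, by omega⟩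
        (by simp; omega) (by simp; omega) (by simp; omega) (by simp)
        (by simp [Fin.ext_iff]; omega) (by simp [Fin.ext_iff]; omega))
      simp only at h0 h0'
      refine allCyc_step hP _ _ _ (by omega) (by omega) (h2 _ (by simp; omega)) ?_ hm
      intro he
      have := g.injective he
      simp [Fin.ext_iff] at this
  rw [← Perm.closure_three_cycles_eq_alternating, Subgroup.closure_le]
  intro σ hσ
  obtain ⟨a, b, c, hab, hac, hbc, rfl⟩ : ∃ a b c, a ≠ b ∧ a ≠ c ∧ b ≠ c ∧ σ = cyc a b c := by
    have hσ' : σ.IsThreeCycle := hσ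
    have hc := hσ'.isCycle
    obtain ⟨a, ha, -⟩ := hc
    have h3 : σ ^ 3 = 1 := by rw [← hσ'.orderOf]; exact pow_orderOf_eq_one σ
    have h3' : ∀ x, σ (σ (σ x)) = x := fun x => by
      have := congrArg (fun τ : Perm (Fin n) => τ x) h3
      simpa [pow_succ] using this
    have hd : σ (σ a) ≠ a := fun e => ha (by have := h3' a; rw [e] at this; exact this)
    have hd2 : σ (σ a) ≠ σ a := fun e => ha (σ.injective e)
    have hsupp : ({a, σ a, σ (σ a)} : Finset (Fin n)) = σ.support := by
      apply Finset.eq_of_subset_of_card_le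
      · intro x hx
        simp only [Finset.mem_insert, Finset.mem_singleton] at hx
        rw [Perm.mem_support]
        rcases hx with rfl | rfl | rfl
        · exact ha
        · exact hd2
        · rw [h3']; exact hd.symm
      · rw [hσ'.card_support, Finset.card_eq_three.2 ⟨a, σ a, σ (σ a), ha.symm, hd.symm, hd2.symm, rfl⟩]
    refine ⟨a, σ a, σ (σ a), ha.symm, hd.symm, hd2.symm, ?_⟩
    obtain ⟨e1, e2, e3⟩ := cyc_apply ha.symm hd2.symm hd.symm
    apply Equiv.ext
    intro x
    by_cases hx : x ∈ σ.support
    · rw [← hsupp] at hx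
      simp only [Finset.mem_insert, Finset.mem_singleton] at hx
      rcases hx with h | h | h
      · rw [h, e1]
      · rw [h, e2]
      · rw [h, e3, h3']
    · have hx' := hx
      rw [Perm.notMem_support] at hx'
      rw [← hsupp] at hx
      simp only [Finset.mem_insert, Finset.mem_singleton, not_or] at hx
      rw [hx', cyc, Perm.mul_apply, swap_apply_of_ne_of_ne hx.2.1 hx.2.2,
        swap_apply_of_ne_of_ne hx.1 hx.2.1]
  exact all n hn le_rfl a b c a.2 b.2 c.2 hab hbc hac

lemma exists_third (k n : ℕ) (hk : 3 ≤ k) (hn : k ≤ n) :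
    ∃ s m, 0 < m ∧ s + m * k ≤ n ∧ ∀ t, 3 ≤ t → t < n →
      (t ≤ (n / k) * k ∧ t % k ≠ 0) ∨ (s + 1 ≤ t ∧ t ≤ s + m * k ∧ (t - s) % k ≠ 0) := by
  have hk0 : 0 < k := by omega
  have hq : 0 < n / k := Nat.div_pos hn hk0
  have hdm := Nat.div_add_mod n k
  have hr := Nat.mod_lt n hk0
  generalize n / k = q at *
  generalize n % k = r at *
  rw [mul_comm] at hdm
  by_cases hr0 : r = 0
  · subst hr0
    by_cases hq1 : q = 1
    · subst hq1
      refine ⟨0, 1, by omega, by omega, fun t h3 ht => Or.inl ⟨by omega, ?_⟩⟩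
      rw [Nat.mod_eq_of_lt (by omega)]; omega
    · refine ⟨1, q - 1, by omega, ?_, fun t h3 ht => ?_⟩
      · obtain ⟨p, rfl⟩ : ∃ p, q = p + 1 := ⟨q - 1, by omega⟩
        simp only [Nat.add_sub_cancel]
        nlinarith
      · by_cases h : t % k = 0
        · right
          obtain ⟨a, rfl⟩ := Nat.dvd_of_mod_eq_zero h
          have ha : a < q := by
            by_contra hh
            have : q * k ≤ k * a := by rw [mul_comm]; exact Nat.mul_le_mul_left k (by omega)
            omega
          have ha0 : 0 < a := by by_contra hh; simp at hh; subst hh; simp at h3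
          obtain ⟨b, rfl⟩ : ∃ b, a = b + 1 := ⟨a - 1, by omega⟩
          have hb : k * (b + 1) ≤ (q - 1) * k := by
            rw [mul_comm]; exact Nat.mul_le_mul_right k (by omega)
          refine ⟨by omega, by omega, ?_⟩
          have : k * (b + 1) - 1 = k * b + (k - 1) := by rw [mul_add]; omega
          rw [this, Nat.mul_add_mod, Nat.mod_eq_of_lt (by omega)]; omega
        · exact Or.inl ⟨by omega, h⟩
  · refine ⟨r, q, hq, by omega, fun t h3 ht => ?_⟩
    by_cases h : t ≤ q * k ∧ t % k ≠ 0
    · exact Or.inl h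
    · right
      have hkq : k ≤ q * k := Nat.le_mul_of_pos_left k hq
      have htk : k ≤ t := by
        by_contra hh
        exact h ⟨by omega, by rw [Nat.mod_eq_of_lt (by omega)]; omega⟩
      refine ⟨by omega, by omega, fun h0 => ?_⟩
      obtain ⟨a, ha⟩ := Nat.dvd_of_mod_eq_zero h0
      have ht' : t = k * a + r := by omega
      have haq : a < q := by
        by_contra hh
        have : q * k ≤ k * a := by rw [mul_comm]; exact Nat.mul_le_mul_left k (by omega)
        omega
      have h5 : k * (a + 1) ≤ q * k := by
        rw [mul_comm]; exact Nat.mul_le_mul_right k (by omega)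
      rw [mul_add] at h5
      apply h
      refine ⟨by omega, ?_⟩
      rw [ht', Nat.mul_add_mod, Nat.mod_eq_of_lt hr]; exact hr0

/-- For any odd `k ≥ 3` and `n ≥ k`, the alternating group on `n` symbols is
generated by three elements of order exactly `k`. -/
theorem alternating_group_generated_by_three_elements_of_odd_order
    (k n : ℕ) (hk : 3 ≤ k) (hko : Odd k) (hn : k ≤ n) :
    ∃ σ₁ σ₂ σ₃ : alternatingGroup (Fin n),
      orderOf σ₁ = k ∧ orderOf σ₂ = k ∧ orderOf σ₃ = k ∧
      Subgroup.closure {σ₁, σ₂, σ₃} = ⊤ := by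
  have hk0 : 0 < k := by omega
  have hq : 0 < n / k := Nat.div_pos hn hk0
  have hqn : 0 + n / k * k ≤ n := by rw [zero_add]; exact Nat.div_mul_le_self n k
  have hkq : k ≤ n / k * k := Nat.le_mul_of_pos_left k hq
  obtain ⟨s, m, hm, hsm, hcov⟩ := exists_third k n hk hn
  let f := rotPerm k 0 (n / k) n hk0 hqn
  let g := rotPerm k s m n hk0 hsm
  let p0 : Fin n := ⟨0, by omega⟩
  let p1 : Fin n := ⟨1, by omega⟩
  let p2 : Fin n := ⟨2, by omega⟩
  let e := swap p0 p1 * f * (swap p0 p1)⁻¹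
  have of : orderOf f = k := rotPerm_order _ _ _ _ hk0 hq hqn
  have og : orderOf g = k := rotPerm_order _ _ _ _ hk0 hm hsm
  have oe : orderOf e = k := by
    rw [← of]
    exact orderOf_injective (MulAut.conj (swap p0 p1)).toMonoidHom
      (MulAut.conj (swap p0 p1)).injective f
  have f0 : f p0 = p1 := by
    apply Fin.ext
    exact blockRot_one_succ (x := 0) hk0 le_rfl (by omega)
      (by rw [Nat.mod_eq_of_lt (by omega)]; omega)
  have f1 : f p1 = p2 := by
    apply Fin.ext
    exact blockRot_one_succ (x := 1) hk0 (by omega) (by omega)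
      (by rw [Nat.mod_eq_of_lt (by omega)]; omega)
  have hc : e * f⁻¹ = cyc p0 p1 p2 := by
    have : f * swap p0 p1 * f⁻¹ = swap p1 p2 := by
      rw [← Equiv.swap_apply_apply, f0, f1]
    rw [cyc, ← this]
    simp only [e, swap_inv, mul_assoc]
  refine ⟨⟨f, mem_alternating_of_order hko f of⟩, ⟨e, mem_alternating_of_order hko e oe⟩,
    ⟨g, mem_alternating_of_order hko g og⟩, ?_, ?_, ?_, ?_⟩
  · rw [Subgroup.orderOf_mk, of]
  · rw [Subgroup.orderOf_mk, oe]
  · rw [Subgroup.orderOf_mk, og]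
  set C := Subgroup.closure ({⟨f, mem_alternating_of_order hko f of⟩,
    ⟨e, mem_alternating_of_order hko e oe⟩,
    ⟨g, mem_alternating_of_order hko g og⟩} : Set (alternatingGroup (Fin n))) with hC
  let G := C.map (alternatingGroup (Fin n)).subtype
  have fG : f ∈ G := ⟨⟨f, mem_alternating_of_order hko f of⟩,
    Subgroup.subset_closure (by simp), rfl⟩
  have eG : e ∈ G := ⟨⟨e, mem_alternating_of_order hko e oe⟩,
    Subgroup.subset_closure (by simp), rfl⟩
  have gG : g ∈ G := ⟨⟨g, mem_alternating_of_order hko g og⟩,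
    Subgroup.subset_closure (by simp), rfl⟩
  have hle : alternatingGroup (Fin n) ≤ G := by
    refine generates (by omega) (G := G) ?_ ?_
    · change cyc p0 p1 p2 ∈ G
      rw [← hc]; exact G.mul_mem eG (G.inv_mem fG)
    · intro t h3 ht
      rcases hcov t h3 ht with ⟨h1, h2⟩ | ⟨h1, h2, h4⟩
      · refine ⟨f, fG, fun x => blockRot_one_le _ _ _ _ hk0, ?_⟩
        rintro x rfl
        exact blockRot_one_succ hk0 (by omega) (by omega) (by simpa using h2)
      · refine ⟨g, gG, fun x => blockRot_one_le _ _ _ _ hk0, ?_⟩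
        rintro x rfl
        exact blockRot_one_succ hk0 (by omega) (by omega) h4
  rw [eq_top_iff]
  rintro ⟨x, hx⟩ -
  obtain ⟨y, hy, hyx⟩ := hle hx
  have : y = ⟨x, hx⟩ := Subtype.ext hyx
  rwa [← this]
end

section
/- Let k ≥ 4 be an even integer and let n ≥ k + 2. Then there exist four permutations σ₁, σ₂, σ₃, σ₄ in the alternating group A_n, each of order exactly k, such that the subgroup they generate is all of A_n. -/
open Equiv Equiv.Perm Pointwise in
/-- A closure criterion: transitivity, a three-cycle `t`, and every generator maps some point
of the support of `t` into this support (or fixes one of its points). -/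
lemma alternating_le_closure_aux {n : ℕ} (S : Set (Perm (Fin n))) (a b c : Fin n)
    (hab : a ≠ b) (hac : a ≠ c) (hbc : b ≠ c)
    (ht : swap a b * swap a c ∈ Subgroup.closure S)
    (hS : ∀ σ ∈ S, ∃ x ∈ ({a, b, c} : Set (Fin n)), σ x ∈ ({a, b, c} : Set (Fin n)))
    (htr : ∀ B : Set (Fin n), c ∈ B → (∀ σ ∈ S, ∀ x, σ x ∈ B ↔ x ∈ B) → B = Set.univ) :
    alternatingGroup (Fin n) ≤ Subgroup.closure S := by
  set H := Subgroup.closure S with hH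
  have hpre : MulAction.IsPretransitive H (Fin n) := by
    rw [MulAction.isPretransitive_iff_base c]
    intro x
    have : MulAction.orbit H c = Set.univ := by
      apply htr _ (MulAction.mem_orbit_self c)
      intro σ hσ x
      rw [← MulAction.orbit_eq_iff, ← MulAction.orbit_eq_iff]
      have := MulAction.orbit_smul (⟨σ, Subgroup.subset_closure hσ⟩ : H) x
      change MulAction.orbit H (σ x) = _ at this
      rw [this]
    have hx : x ∈ MulAction.orbit H c := by rw [this]; trivial
    exact hx
  have t1 : (swap a b * swap a c) c = b := by simp
  have t2 : (swap a b * swap a c) b = a := by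
    rw [Perm.mul_apply, swap_apply_of_ne_of_ne hab.symm hbc, swap_apply_right]
  have t3 : (swap a b * swap a c) a = c := by
    rw [Perm.mul_apply, swap_apply_left, swap_apply_of_ne_of_ne hac.symm hbc.symm]
  have t4 : ∀ w, w ≠ a → w ≠ b → w ≠ c → (swap a b * swap a c) w = w := by
    intro w h1 h2 h3
    rw [Perm.mul_apply, swap_apply_of_ne_of_ne h1 h3, swap_apply_of_ne_of_ne h1 h2]
  have key : ∀ B : Set (Fin n), MulAction.IsBlock H B → c ∈ B → ∀ w ∈ B, w ≠ c →
      B = Set.univ := by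
    intro B hB hc w hw hwc
    have hB' : ∀ σ ∈ H, ∀ x ∈ B, σ x ∈ B → ∀ y, σ y ∈ B ↔ y ∈ B := by
      intro σ hσ x hx hσx y
      have h1 := MulAction.isBlock_iff_smul_eq_of_mem.1 hB (g := (⟨σ, hσ⟩ : H)) hx hσx
      have h2 := Set.smul_mem_smul_set_iff (a := (⟨σ, hσ⟩ : H)) (s := B) (x := y)
      rw [h1] at h2
      exact h2
    have hst : ∀ y, (swap a b * swap a c) y ∈ B ↔ y ∈ B := by
      by_cases h1 : w = a
      · exact hB' _ ht w hw (by rw [h1, t3]; exact hc)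
      by_cases h2 : w = b
      · exact hB' _ ht c hc (by rw [t1, ← h2]; exact hw)
      · exact hB' _ ht w hw (by rw [t4 w h1 h2 hwc]; exact hw)
    have hb : b ∈ B := by rw [← t1, hst]; exact hc
    have ha : a ∈ B := by rw [← t2, hst]; exact hb
    have hsub : ∀ x ∈ ({a, b, c} : Set (Fin n)), x ∈ B := by
      rintro x (rfl | rfl | rfl) <;> assumption
    apply htr B hc
    intro σ hσ
    obtain ⟨x, hx, hx'⟩ := hS σ hσ
    exact hB' σ (Subgroup.subset_closure hσ) x (hsub x hx) (hsub _ hx')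
  have hprim : MulAction.IsPreprimitive H (Fin n) := by
    refine { isTrivialBlock_of_isBlock := ?_ }
    intro B hB
    by_cases hs : B.Subsingleton
    · exact Or.inl hs
    rw [Set.not_subsingleton_iff] at hs
    obtain ⟨x, hx, y, hy, hxy⟩ := hs
    obtain ⟨h, hh⟩ := hpre.exists_smul_eq x c
    rw [← MulAction.IsTrivialBlock.smul_iff h]
    right
    apply key (h • B) (hB.translate h) (hh ▸ Set.smul_mem_smul_set hx) (h • y)
      (Set.smul_mem_smul_set hy)
    intro he
    rw [← hh] at he
    exact hxy (smul_left_cancel h he).symm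
  exact alternatingGroup_le_of_isPreprimitive_of_isThreeCycle_mem hprim
    (isThreeCycle_swap_mul_swap_same hab hac hbc) ht

open Equiv Equiv.Perm in
lemma exists_swaps_aux (n k : ℕ) (hke : Even k) (r : ℕ) : k + 2 * r ≤ n →
    ∃ τ : Perm (Fin n), sign τ = (-1) ^ r ∧
      ∀ x : Fin n, (τ x).val =
        if k ≤ x.val ∧ x.val < k + 2 * r then
          (if x.val % 2 = 0 then x.val + 1 else x.val - 1) else x.val := by
  induction r with
  | zero =>
    intro _
    refine ⟨1, by simp, ?_⟩
    intro x
    rw [if_neg (by omega)]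
    rfl
  | succ r ih =>
    intro h
    obtain ⟨τ, h1, h2⟩ := ih (by omega)
    have hk2 : k % 2 = 0 := Nat.even_iff.1 hke
    have hne : (⟨k + 2 * r, by omega⟩ : Fin n) ≠ ⟨k + 2 * r + 1, by omega⟩ := by
      simp
    refine ⟨τ * swap ⟨k + 2 * r, by omega⟩ ⟨k + 2 * r + 1, by omega⟩, ?_, ?_⟩
    · rw [Perm.sign_mul, sign_swap hne, h1, pow_succ]
    · intro x
      rw [Perm.mul_apply]
      by_cases hx : x.val = k + 2 * r
      · have : x = ⟨k + 2 * r, by omega⟩ := Fin.ext hx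
        rw [this, swap_apply_left, h2]
        dsimp only
        split_ifs <;> omega
      by_cases hx' : x.val = k + 2 * r + 1
      · have : x = ⟨k + 2 * r + 1, by omega⟩ := Fin.ext hx'
        rw [this, swap_apply_right, h2]
        dsimp only
        split_ifs <;> omega
      · rw [swap_apply_of_ne_of_ne (fun e => hx (by rw [e])) (fun e => hx' (by rw [e])), h2]
        split_ifs <;> omega

open Equiv Equiv.Perm in
lemma exists_sigma_aux (n k r : ℕ) (hk : 4 ≤ k) (hke : Even k) (hr : r % 2 = 1)
    (h : k + 2 * r ≤ n) :
    ∃ σ : Perm (Fin n), sign σ = 1 ∧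
      ∀ x : Fin n, (σ x).val =
        if x.val < k then (if x.val + 1 = k then 0 else x.val + 1)
        else if x.val < k + 2 * r then
          (if x.val % 2 = 0 then x.val + 1 else x.val - 1) else x.val := by
  obtain ⟨τ, h1, h2⟩ := exists_swaps_aux n k hke r h
  have hk2 : k % 2 = 0 := Nat.even_iff.1 hke
  refine ⟨Fin.cycleRange ⟨k - 1, by omega⟩ * τ, ?_, ?_⟩
  · rw [Perm.sign_mul, h1, Fin.sign_cycleRange, ← pow_add]
    apply Even.neg_one_pow
    rw [Nat.even_iff]
    dsimp only
    omega
  · intro x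
    rw [Perm.mul_apply]
    have h3 := h2 x
    by_cases hx : x.val < k
    · have hτ : τ x = x := by
        apply Fin.ext
        rw [h3, if_neg (by omega)]
      rw [hτ, Fin.coe_cycleRange_of_le (Fin.le_def.2 (by dsimp only; omega)), if_pos hx]
      simp only [Fin.ext_iff]
      split_ifs <;> omega
    · rw [Fin.cycleRange_of_gt, h3]
      · split_ifs <;> omega
      · rw [Fin.lt_def, h3]
        dsimp only
        split_ifs <;> omega

open Equiv Equiv.Perm in
lemma order_sigma_aux (n k r : ℕ) (hk : 4 ≤ k) (hke : Even k) (h : k + 2 * r ≤ n)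
    (σ : Perm (Fin n))
    (hσ : ∀ x : Fin n, (σ x).val =
        if x.val < k then (if x.val + 1 = k then 0 else x.val + 1)
        else if x.val < k + 2 * r then
          (if x.val % 2 = 0 then x.val + 1 else x.val - 1) else x.val) :
    orderOf σ = k := by
  have hk2 : k % 2 = 0 := Nat.even_iff.1 hke
  have hpow : ∀ (j : ℕ) (x : Fin n), x.val < k → ((σ ^ j) x).val = (x.val + j) % k := by
    intro j x hx
    induction j with
    | zero => simp [Nat.mod_eq_of_lt hx]
    | succ j ih =>
      have hlt : (x.val + j) % k < k := Nat.mod_lt _ (by omega)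
      rw [pow_succ', Perm.mul_apply, hσ, ih, if_pos hlt, ← add_assoc, Nat.add_mod (x.val + j) 1 k,
        Nat.mod_eq_of_lt (show 1 < k by omega)]
      split_ifs with h1
      · rw [h1, Nat.mod_self]
      · exact (Nat.mod_eq_of_lt (by omega)).symm
  rw [orderOf_eq_iff (by omega)]
  constructor
  · ext x
    by_cases hx : x.val < k
    · rw [hpow k x hx, Nat.add_mod_right, Nat.mod_eq_of_lt hx]
      rfl
    · have hsq : (σ ^ 2) x = x := by
        apply Fin.ext
        rw [pow_two, Perm.mul_apply, hσ, hσ]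
        split_ifs <;> omega
      obtain ⟨m, rfl⟩ := hke
      rw [← two_mul, pow_mul]
      have : ∀ m : ℕ, ((σ ^ 2) ^ m) x = x := by
        intro m
        induction m with
        | zero => rfl
        | succ m ih => rw [pow_succ, Perm.mul_apply, hsq, ih]
      rw [this]
      rfl
  · intro m hm hm0 he
    have := hpow m ⟨0, by omega⟩ (by dsimp only; omega)
    rw [he] at this
    simp only [Perm.one_apply, zero_add, Nat.mod_eq_of_lt hm] at this
    omega

open Equiv Equiv.Perm in
lemma orderOf_conj_aux {n : ℕ} (g σ : Perm (Fin n)) : orderOf (g * σ * g⁻¹) = orderOf σ :=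
  orderOf_injective (MulAut.conj g).toMonoidHom (MulAut.conj g).injective σ

open Equiv Equiv.Perm in
lemma sign_conj_aux {n : ℕ} (g σ : Perm (Fin n)) (h : sign σ = 1) :
    sign (g * σ * g⁻¹) = 1 := by
  rw [Perm.sign_mul, Perm.sign_mul, h, sign_inv, mul_one, Int.units_mul_self]

open Equiv Equiv.Perm in
lemma exists_four_aux (k n : ℕ) (hk : 4 ≤ k) (hke : Even k) (hn : k + 2 ≤ n) :
    ∃ σ₁ σ₂ σ₃ σ₄ : Perm (Fin n),
      (sign σ₁ = 1 ∧ sign σ₂ = 1 ∧ sign σ₃ = 1 ∧ sign σ₄ = 1) ∧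
      orderOf σ₁ = k ∧ orderOf σ₂ = k ∧ orderOf σ₃ = k ∧ orderOf σ₄ = k ∧
      alternatingGroup (Fin n) ≤ Subgroup.closure {σ₁, σ₂, σ₃, σ₄} := by
  have hk2 : k % 2 = 0 := Nat.even_iff.1 hke
  obtain ⟨r, hr, hr1, hr2⟩ : ∃ r, r % 2 = 1 ∧ k + 2 * r ≤ n ∧ n ≤ k + 2 * r + 3 :=
    ⟨2 * ((n - k - 2) / 4) + 1, by omega, by omega, by omega⟩
  obtain ⟨σ, hs, hσ⟩ := exists_sigma_aux n k r hk hke hr hr1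
  have ho := order_sigma_aux n k r hk hke hr1 σ hσ
  obtain ⟨g, hg⟩ : ∃ g : Perm (Fin n), ∀ x : Fin n, x.val + 1 < n → (g x).val = x.val + 1 := by
    refine ⟨Fin.cycleRange ⟨n - 1, by omega⟩, fun x hx => ?_⟩
    apply Fin.coe_cycleRange_of_lt
    rw [Fin.lt_def]
    dsimp only
    omega
  have conj_apply : ∀ g x, (g * σ * g⁻¹) (g x) = g (σ x) := by
    intro g x
    simp
  let p0 : Fin n := ⟨0, by omega⟩
  let p1 : Fin n := ⟨1, by omega⟩
  let p2 : Fin n := ⟨2, by omega⟩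
  have h01 : p0 ≠ p1 := by simp [p0, p1]
  have h02 : p0 ≠ p2 := by simp [p0, p2]
  have h12 : p1 ≠ p2 := by simp [p1, p2]
  have s0 : σ p0 = p1 := by
    apply Fin.ext
    rw [hσ]
    simp only [p0, p1]
    split_ifs <;> omega
  have s1 : σ p1 = p2 := by
    apply Fin.ext
    rw [hσ]
    simp only [p2, p1]
    split_ifs <;> omega
  let R : Perm (Fin n) := Fin.revPerm
  have hR : ∀ x, (R x).val = n - 1 - x.val := by
    intro x
    simp only [R, Fin.revPerm_apply, Fin.val_rev]
    omega
  let s : Perm (Fin n) := swap p1 p2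
  refine ⟨σ, s * σ * s⁻¹, g * σ * g⁻¹, R * σ * R⁻¹,
    ⟨hs, sign_conj_aux _ _ hs, sign_conj_aux _ _ hs, sign_conj_aux _ _ hs⟩,
    ho, (orderOf_conj_aux _ _).trans ho, (orderOf_conj_aux _ _).trans ho,
    (orderOf_conj_aux _ _).trans ho, ?_⟩
  have m1 : σ ∈ ({σ, s * σ * s⁻¹, g * σ * g⁻¹, R * σ * R⁻¹} : Set (Perm (Fin n))) := by simp
  have m2 : s * σ * s⁻¹ ∈ ({σ, s * σ * s⁻¹, g * σ * g⁻¹, R * σ * R⁻¹} : Set (Perm (Fin n))) := by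
    simp
  have m3 : g * σ * g⁻¹ ∈ ({σ, s * σ * s⁻¹, g * σ * g⁻¹, R * σ * R⁻¹} : Set (Perm (Fin n))) := by
    simp
  have m4 : R * σ * R⁻¹ ∈ ({σ, s * σ * s⁻¹, g * σ * g⁻¹, R * σ * R⁻¹} : Set (Perm (Fin n))) := by
    simp
  apply alternating_le_closure_aux _ p1 p2 p0 h12 h01.symm h02.symm
  · have : swap p1 p2 * swap p1 p0 = (s * σ * s⁻¹)⁻¹ * σ := by
      have e : swap p1 p0 = σ⁻¹ * s * σ := by
        have := swap_apply_apply σ p1 p0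
        rw [s0, s1] at this
        have hss : s = σ * swap p1 p0 * σ⁻¹ := by
          rw [← this]; exact swap_comm _ _
        rw [hss]
        group
      rw [e]
      change s * _ = _
      have hsi : s⁻¹ = s := swap_inv _ _
      simp only [mul_inv_rev, hsi, mul_assoc]
    rw [this]
    exact mul_mem (inv_mem (Subgroup.subset_closure m2)) (Subgroup.subset_closure m1)
  · rintro f (rfl | rfl | rfl | rfl)
    · exact ⟨p0, by simp, by simp [s0]⟩
    · refine ⟨p0, by simp, ?_⟩
      have e0 : s p0 = p0 := swap_apply_of_ne_of_ne h01 h02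
      have e1 : s p1 = p2 := swap_apply_left _ _
      have := conj_apply s p0
      rw [e0, s0, e1] at this
      rw [this]
      simp
    · refine ⟨p1, by simp, ?_⟩
      have e0 : g p0 = p1 := Fin.ext (hg p0 (by simp only [p0]; omega))
      have e1 : g p1 = p2 := Fin.ext (hg p1 (by simp only [p1]; omega))
      have := conj_apply g p0
      rw [e0, s0, e1] at this
      rw [this]
      simp
    · refine ⟨p0, by simp, ?_⟩
      have hl : n - 1 < n := by omega
      have e0 : R ⟨n - 1, hl⟩ = p0 := by
        apply Fin.ext
        rw [hR]
        simp only [p0]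
        omega
      have := conj_apply R ⟨n - 1, hl⟩
      rw [e0] at this
      rw [this]
      have hv := hR (σ ⟨n - 1, hl⟩)
      rw [hσ] at hv
      dsimp only at hv
      have hv' : (R (σ ⟨n - 1, hl⟩)).val = 0 ∨ (R (σ ⟨n - 1, hl⟩)).val = 1 := by
        rw [hv]
        split_ifs <;> omega
      rcases hv' with h | h
      · have : R (σ ⟨n - 1, hl⟩) = p0 := Fin.ext h
        rw [this]; simp
      · have : R (σ ⟨n - 1, hl⟩) = p1 := Fin.ext h
        rw [this]; simp
  · intro B hB hinv
    have low : ∀ x : ℕ, ∀ hx : x + 4 ≤ n, (⟨x, by omega⟩ : Fin n) ∈ B := by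
      intro x
      induction x with
      | zero => intro _; exact hB
      | succ x ih =>
        intro hx
        have hxB := ih (by omega)
        by_cases hc : x + 1 < k ∨ x % 2 = 0
        · have e : σ ⟨x, by omega⟩ = ⟨x + 1, by omega⟩ := by
            apply Fin.ext
            rw [hσ]
            dsimp only
            split_ifs <;> omega
          rw [← e]
          exact (hinv _ m1 _).2 hxB
        · have e : σ ⟨x - 1, by omega⟩ = ⟨x, by omega⟩ := by
            apply Fin.ext
            rw [hσ]
            dsimp only
            split_ifs <;> omega
          have e1 : g ⟨x - 1, by omega⟩ = ⟨x, by omega⟩ := by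
            apply Fin.ext
            rw [hg _ (by dsimp only; omega)]
            dsimp only
            omega
          have e2 : g ⟨x, by omega⟩ = ⟨x + 1, by omega⟩ := by
            apply Fin.ext
            rw [hg _ (by dsimp only; omega)]
          have := conj_apply g ⟨x - 1, by omega⟩
          rw [e, e1, e2] at this
          rw [← this]
          exact (hinv _ m3 _).2 hxB
    have step : ∀ j : ℕ, ∀ hj : j < 3, R ⟨j + 1, by omega⟩ ∈ B → R ⟨j, by omega⟩ ∈ B := by
      intro j hj h
      rw [← hinv _ m4, conj_apply]
      have e : σ ⟨j, by omega⟩ = ⟨j + 1, by omega⟩ := by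
        apply Fin.ext
        rw [hσ]
        dsimp only
        split_ifs <;> omega
      rw [e]
      exact h
    have r3 : R ⟨3, by omega⟩ ∈ B := by
      have e : R ⟨3, by omega⟩ = ⟨n - 4, by omega⟩ := by
        apply Fin.ext
        rw [hR]
        dsimp only
        omega
      rw [e]
      exact low (n - 4) (by omega)
    have r2 := step 2 (by omega) r3
    have r1 := step 1 (by omega) r2
    have r0 := step 0 (by omega) r1
    rw [Set.eq_univ_iff_forall]
    intro x
    by_cases hx : x.val + 4 ≤ n
    · exact low x.val hx
    have hx' := x.isLt
    have h3 : x.val = n - 1 - 0 ∨ x.val = n - 1 - 1 ∨ x.val = n - 1 - 2 := by omega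
    rcases h3 with h | h | h
    · have : x = R ⟨0, by omega⟩ := Fin.ext (by rw [hR]; exact h)
      rw [this]; exact r0
    · have : x = R ⟨1, by omega⟩ := Fin.ext (by rw [hR]; exact h)
      rw [this]; exact r1
    · have : x = R ⟨2, by omega⟩ := Fin.ext (by rw [hR]; exact h)
      rw [this]; exact r2

/-- For any even `k ≥ 4` and `n ≥ k + 2`, the alternating group on `n` symbols is
generated by four elements of order exactly `k`. -/
theorem alternating_group_generated_by_four_elements_of_even_order
    (k n : ℕ) (hk : 4 ≤ k) (hke : Even k) (hn : k + 2 ≤ n) :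
    ∃ σ₁ σ₂ σ₃ σ₄ : alternatingGroup (Fin n),
      orderOf σ₁ = k ∧ orderOf σ₂ = k ∧ orderOf σ₃ = k ∧ orderOf σ₄ = k ∧
      Subgroup.closure {σ₁, σ₂, σ₃, σ₄} = ⊤ := by
  obtain ⟨s1, s2, s3, s4, ⟨h1, h2, h3, h4⟩, o1, o2, o3, o4, hle⟩ :=
    exists_four_aux k n hk hke hn
  refine ⟨⟨s1, Equiv.Perm.mem_alternatingGroup.2 h1⟩, ⟨s2, Equiv.Perm.mem_alternatingGroup.2 h2⟩,
    ⟨s3, Equiv.Perm.mem_alternatingGroup.2 h3⟩, ⟨s4, Equiv.Perm.mem_alternatingGroup.2 h4⟩,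
    by rw [Subgroup.orderOf_mk, o1], by rw [Subgroup.orderOf_mk, o2],
    by rw [Subgroup.orderOf_mk, o3], by rw [Subgroup.orderOf_mk, o4], ?_⟩
  rw [eq_top_iff]
  rintro ⟨x, hx⟩ -
  have hx' := hle hx
  have hm : x ∈ (Subgroup.closure {(⟨s1, Equiv.Perm.mem_alternatingGroup.2 h1⟩ :
      alternatingGroup (Fin n)), ⟨s2, Equiv.Perm.mem_alternatingGroup.2 h2⟩,
      ⟨s3, Equiv.Perm.mem_alternatingGroup.2 h3⟩,
      ⟨s4, Equiv.Perm.mem_alternatingGroup.2 h4⟩}).map (alternatingGroup (Fin n)).subtype := by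
    rw [MonoidHom.map_closure]
    simpa [Set.image_insert_eq] using hx'
  obtain ⟨y, hy, hyx⟩ := hm
  have : y = ⟨x, hx⟩ := Subtype.ext hyx
  rw [← this]
  exact hy
end

section
/- Let k ≥ 5 and n ≥ 2(k − 1). Then there exist eight matrices M₁, …, M₈ in SL(n, ℤ), each of order exactly k, such that the subgroup they generate is all of SL(n, ℤ). -/
open Matrix

/-- The first `r` columns of `M` are standard basis vectors. -/
def ColsStd {n : ℕ} (r : ℕ) (M : SpecialLinearGroup (Fin n) ℤ) : Prop :=
  ∀ j : Fin n, j.val < r → ∀ i, M.1 i j = if i = j then 1 else 0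

lemma tv_mul_same {n : ℕ} {i j : Fin n} (h : i ≠ j) (x : ℤ) (M : SpecialLinearGroup (Fin n) ℤ)
    (b : Fin n) : (SpecialLinearGroup.transvection h x * M).1 i b = M.1 i b + x * M.1 j b := by
  exact Matrix.transvection_mul_apply_same i j b x M.1

lemma tv_mul_of_ne {n : ℕ} {i j : Fin n} (h : i ≠ j) (x : ℤ) (M : SpecialLinearGroup (Fin n) ℤ)
    (a b : Fin n) (ha : a ≠ i) :
    (SpecialLinearGroup.transvection h x * M).1 a b = M.1 a b := by
  exact Matrix.transvection_mul_apply_of_ne i j a b ha x M.1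

lemma ColsStd.tv_mul {n r : ℕ} {M : SpecialLinearGroup (Fin n) ℤ} (hM : ColsStd r M)
    {i j : Fin n} (h : i ≠ j) (hj : r ≤ j.val) (x : ℤ) :
    ColsStd r (SpecialLinearGroup.transvection h x * M) := by
  intro b hb a
  have hz : M.1 j b = 0 := by
    rw [hM b hb j, if_neg]; rintro rfl; omega
  by_cases ha : a = i
  · subst ha; rw [tv_mul_same, hz, hM b hb]; simp
  · rw [tv_mul_of_ne _ _ _ _ _ ha, hM b hb]

section gen
variable {n : ℕ} {H : Subgroup (SpecialLinearGroup (Fin n) ℤ)}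

lemma clear_col (hH : ∀ (i j : Fin n) (h : i ≠ j) (x : ℤ), SpecialLinearGroup.transvection h x ∈ H)
    (c : Fin n) : ∀ (N : ℕ) (M : SpecialLinearGroup (Fin n) ℤ),
      ∑ i ∈ Finset.univ.filter (· ≠ c), (M.1 i c).natAbs = N → ColsStd c.val M → M.1 c c = 1 →
      ∃ g ∈ H, ColsStd (c.val + 1) (g * M) := by
  intro N
  induction N using Nat.strong_induction_on with
  | _ N ih =>
  intro M hN hM hc
  by_cases hall : ∀ i, i ≠ c → M.1 i c = 0
  · refine ⟨1, H.one_mem, ?_⟩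
    rw [one_mul]
    intro j hj i
    rcases Nat.lt_succ_iff_lt_or_eq.1 hj with h | h
    · exact hM j h i
    · have : j = c := Fin.ext h
      subst this
      split_ifs with hi
      · rw [hi, hc]
      · exact hall i hi
  · push Not at hall
    obtain ⟨i, hi, hne⟩ := hall
    set t := SpecialLinearGroup.transvection hi (-(M.1 i c)) with ht
    have hti : (t * M).1 i c = 0 := by rw [ht, tv_mul_same, hc]; ring
    have hto : ∀ a, a ≠ i → (t * M).1 a c = M.1 a c := fun a ha => tv_mul_of_ne _ _ _ _ _ ha
    obtain ⟨g, hg, hgM⟩ := ih (∑ i ∈ Finset.univ.filter (· ≠ c), ((t * M).1 i c).natAbs) (by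
      rw [← hN]
      apply Finset.sum_lt_sum
      · intro a _
        by_cases ha : a = i
        · rw [ha, hti]; simp
        · rw [hto a ha]
      · exact ⟨i, by simp [hi], by rw [hti]; simpa [Int.natAbs_pos] using hne⟩)
      (t * M) rfl (hM.tv_mul hi le_rfl _) (by rw [hto c (Ne.symm hi), hc])
    exact ⟨g * t, H.mul_mem hg (hH _ _ _ _), by rwa [mul_assoc]⟩

lemma reduce_col (hH : ∀ (i j : Fin n) (h : i ≠ j) (x : ℤ), SpecialLinearGroup.transvection h x ∈ H)
    (c : Fin n) : ∀ (N : ℕ) (M : SpecialLinearGroup (Fin n) ℤ),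
      ∑ i ∈ Finset.univ.filter (c ≤ ·), (M.1 i c).natAbs = N → ColsStd c.val M →
      ∃ g ∈ H, ColsStd c.val (g * M) ∧
        ∃ p, c ≤ p ∧ ∀ i, c ≤ i → i ≠ p → (g * M).1 i c = 0 := by
  intro N
  induction N using Nat.strong_induction_on with
  | _ N ih =>
  intro M hN hM
  by_cases hall : ∃ p, c ≤ p ∧ ∀ i, c ≤ i → i ≠ p → M.1 i c = 0
  · exact ⟨1, H.one_mem, by rwa [one_mul], by rwa [one_mul]⟩
  · push Not at hall
    have key : ∃ i j, i ≠ j ∧ c ≤ i ∧ c ≤ j ∧ M.1 j c ≠ 0 ∧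
        (M.1 j c).natAbs ≤ (M.1 i c).natAbs := by
      obtain ⟨i, hi, -, hi0⟩ := hall c le_rfl
      obtain ⟨j, hj, hji, hj0⟩ := hall i hi
      rcases le_total (M.1 j c).natAbs (M.1 i c).natAbs with h | h
      · exact ⟨i, j, hji.symm, hi, hj, hj0, h⟩
      · exact ⟨j, i, hji, hj, hi, hi0, h⟩
    obtain ⟨i, j, hij, hi, hj, hj0, hle⟩ := key
    obtain ⟨x, hx⟩ : ∃ x : ℤ, (M.1 i c + x * M.1 j c).natAbs < (M.1 i c).natAbs := by
      rcases le_total 0 (M.1 i c) with h1 | h1 <;> rcases le_total 0 (M.1 j c) with h2 | h2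
      · exact ⟨-1, by omega⟩
      · exact ⟨1, by omega⟩
      · exact ⟨1, by omega⟩
      · exact ⟨-1, by omega⟩
    set t := SpecialLinearGroup.transvection hij x with ht
    have hti : (t * M).1 i c = M.1 i c + x * M.1 j c := by rw [ht, tv_mul_same]
    have hto : ∀ a, a ≠ i → (t * M).1 a c = M.1 a c := fun a ha => tv_mul_of_ne _ _ _ _ _ ha
    obtain ⟨g, hg, hgM⟩ := ih (∑ i ∈ Finset.univ.filter (c ≤ ·), ((t * M).1 i c).natAbs) (by
      rw [← hN]
      apply Finset.sum_lt_sum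
      · intro a _
        by_cases ha : a = i
        · rw [ha, hti]; exact hx.le
        · rw [hto a ha]
      · exact ⟨i, by simp [hi], by rw [hti]; exact hx⟩)
      (t * M) rfl (hM.tv_mul hij hj _)
    exact ⟨g * t, H.mul_mem hg (hH _ _ _ _), by rwa [mul_assoc]⟩

lemma unit_entry {M : SpecialLinearGroup (Fin n) ℤ} {c p : Fin n} (hM : ColsStd c.val M)
    (hp : ∀ i, c ≤ i → i ≠ p → M.1 i c = 0) : M.1 p c = 1 ∨ M.1 p c = -1 := by
  set N := M⁻¹ with hNdef
  have hNM : N.1 * M.1 = 1 := by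
    have : N * M = 1 := inv_mul_cancel M
    have := congrArg Subtype.val this
    simpa using this
  have h0 : ∀ i, i < c → N.1 c i = 0 := by
    intro i hi
    have h := congrFun (congrFun hNM c) i
    rw [Matrix.mul_apply, Finset.sum_congr rfl (fun l _ => by rw [hM i hi l])] at h
    simpa [Matrix.one_apply_ne hi.ne'] using h
  have h := congrFun (congrFun hNM c) c
  rw [Matrix.mul_apply, Finset.sum_eq_single p] at h
  · rw [Matrix.one_apply_eq, mul_comm] at h
    exact Int.isUnit_iff.1 (IsUnit.of_mul_eq_one _ h)
  · intro b _ hb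
    rcases lt_or_ge b c with h1 | h1
    · rw [h0 b h1, zero_mul]
    · rw [hp b h1 hb, mul_zero]
  · simp

lemma step_col (hH : ∀ (i j : Fin n) (h : i ≠ j) (x : ℤ), SpecialLinearGroup.transvection h x ∈ H)
    (c : Fin n) (M : SpecialLinearGroup (Fin n) ℤ) (hM : ColsStd c.val M) :
    ∃ g ∈ H, ColsStd (c.val + 1) (g * M) := by
  suffices h : ∃ g ∈ H, ColsStd c.val (g * M) ∧ (g * M).1 c c = 1 by
    obtain ⟨g, hg, h1, h2⟩ := h
    obtain ⟨g', hg', h3⟩ := clear_col hH c _ (g * M) rfl h1 h2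
    exact ⟨g' * g, H.mul_mem hg' hg, by rwa [mul_assoc]⟩
  by_cases hlast : c.val + 1 < n
  · obtain ⟨g, hg, h1, p, hcp, hp⟩ := reduce_col hH c _ M rfl hM
    have hu := unit_entry h1 hp
    -- first arrange a unit in a row below `c`
    have key : ∃ g ∈ H, ColsStd c.val (g * M) ∧ ∃ q, c < q ∧
        ((g * M).1 q c = 1 ∨ (g * M).1 q c = -1) := by
      rcases eq_or_lt_of_le hcp with h | h
      · subst h
        set q : Fin n := ⟨c.val + 1, hlast⟩ with hq
        have hcq : c < q := by rw [Fin.lt_def, hq]; simp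
        refine ⟨SpecialLinearGroup.transvection hcq.ne' 1 * g, H.mul_mem (hH _ _ _ _) hg, ?_, q,
          hcq, ?_⟩
        · rw [mul_assoc]; exact h1.tv_mul _ le_rfl _
        · rw [mul_assoc, tv_mul_same, hp q hcq.le hcq.ne']; simpa using hu
      · exact ⟨g, hg, h1, p, h, hu⟩
    obtain ⟨g, hg, h1, q, hcq, hu⟩ := key
    refine ⟨SpecialLinearGroup.transvection hcq.ne ((1 - (g * M).1 c c) * (g * M).1 q c) * g,
      H.mul_mem (hH _ _ _ _) hg, ?_, ?_⟩
    · rw [mul_assoc]; exact h1.tv_mul _ hcq.le _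
    · rw [mul_assoc, tv_mul_same]
      rcases hu with h | h <;> rw [h] <;> ring
  · refine ⟨1, H.one_mem, by rwa [one_mul], ?_⟩
    rw [one_mul]
    have hle : ∀ i, i ≤ c := fun i => by rw [Fin.le_def]; omega
    have hd : M.1.det = ∏ i, M.1 i i := by
      apply Matrix.det_of_isUpperTriangular
      intro i j hij
      have hij : j < i := hij
      rw [hM j (lt_of_lt_of_le hij (hle i)) i, if_neg hij.ne']
    rw [M.2, Finset.prod_eq_single c] at hd
    · exact hd.symm
    · intro b _ hb
      rw [hM b (Fin.lt_def.1 (lt_of_le_of_ne (hle b) hb)) b, if_pos rfl]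
    · simp

lemma eq_top_of_transvections
    (hH : ∀ (i j : Fin n) (h : i ≠ j) (x : ℤ), SpecialLinearGroup.transvection h x ∈ H) :
    H = ⊤ := by
  rw [eq_top_iff]
  intro M _
  have key : ∀ r, r ≤ n → ∃ g ∈ H, ColsStd r (g * M) := by
    intro r
    induction r with
    | zero => exact fun _ => ⟨1, H.one_mem, fun j hj => absurd hj (Nat.not_lt_zero _)⟩
    | succ r ih =>
      intro hr
      obtain ⟨g, hg, h⟩ := ih (by omega)
      obtain ⟨g', hg', h'⟩ := step_col hH ⟨r, hr⟩ (g * M) h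
      exact ⟨g' * g, H.mul_mem hg' hg, by rw [mul_assoc]; exact h'⟩
  obtain ⟨g, hg, h⟩ := key n le_rfl
  have : g * M = 1 := by
    ext i j
    rw [h j j.2 i]; simp [Matrix.one_apply]
  rw [eq_inv_of_mul_eq_one_right this]
  exact H.inv_mem hg

end gen
set_option linter.unusedSimpArgs false

/-- signs: `sign σ` at `z` and `1` elsewhere -/
def sgnAt {n : ℕ} (σ : Equiv.Perm (Fin n)) (z : Fin n) (j : Fin n) : ℤ :=
  if j = z then ((Equiv.Perm.sign σ : ℤˣ) : ℤ) else 1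

lemma sgn_mul_self {n : ℕ} (σ : Equiv.Perm (Fin n)) :
    ((Equiv.Perm.sign σ : ℤˣ) : ℤ) * ((Equiv.Perm.sign σ : ℤˣ) : ℤ) = 1 := by
  rw [← Units.val_mul, Int.units_mul_self, Units.val_one]

lemma sgnAt_mul_self {n : ℕ} (σ : Equiv.Perm (Fin n)) (z j : Fin n) :
    sgnAt σ z j * sgnAt σ z j = 1 := by
  unfold sgnAt; split_ifs
  · exact sgn_mul_self σ
  · rfl

/-- signed permutation matrix sending `e_j` to `± e_{σ j}`, of determinant one -/
def sperm {n : ℕ} (σ : Equiv.Perm (Fin n)) (z : Fin n) : SpecialLinearGroup (Fin n) ℤ :=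
  ⟨(σ⁻¹).permMatrix ℤ * diagonal (sgnAt σ z), by
    rw [det_mul, det_permutation, det_diagonal, Finset.prod_eq_single z]
    · simp only [sgnAt, if_true, Equiv.Perm.sign_inv]
      exact sgn_mul_self σ
    · intro b _ hb; simp [sgnAt, hb]
    · simp⟩

lemma sperm_apply {n : ℕ} (σ : Equiv.Perm (Fin n)) (z i j : Fin n) :
    (sperm σ z).1 i j = if i = σ j then sgnAt σ z j else 0 := by
  have : σ.symm i = j ↔ i = σ j := σ.symm_apply_eq
  simp [sperm, Matrix.mul_diagonal, PEquiv.toMatrix_apply, Equiv.toPEquiv_apply, Equiv.Perm.permMatrix,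
    Option.mem_def, this]

lemma sperm_pow_apply {n : ℕ} (σ : Equiv.Perm (Fin n)) (z : Fin n) (hz : σ z = z) (m : ℕ)
    (i j : Fin n) :
    ((sperm σ z) ^ m).1 i j = if i = (σ ^ m) j then (sgnAt σ z j) ^ m else 0 := by
  induction m generalizing i j with
  | zero => simp [Matrix.one_apply]
  | succ m ih =>
    have hs : sgnAt σ z (σ j) = sgnAt σ z j := by
      have : σ j = z ↔ j = z := by
        constructor
        · intro h; exact σ.injective (h.trans hz.symm)
        · rintro rfl; exact hz
      simp [sgnAt, this]
    have : ((sperm σ z) ^ (m + 1)).1 i j = ∑ l, ((sperm σ z) ^ m).1 i l * (sperm σ z).1 l j := by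
      rw [pow_succ]; rfl
    rw [this, Finset.sum_eq_single (σ j)]
    · rw [ih, sperm_apply, if_pos rfl, hs, pow_succ, pow_succ]
      rw [Equiv.Perm.mul_apply]
      by_cases h : i = (σ ^ m) (σ j)
      · rw [if_pos h, if_pos h]
      · rw [if_neg h, if_neg h, zero_mul]
    · intro b _ hb; rw [sperm_apply, if_neg hb, mul_zero]
    · simp

lemma orderOf_sperm {n k : ℕ} (hk : 0 < k) (σ : Equiv.Perm (Fin n)) (z : Fin n) (hz : σ z = z)
    (h1 : σ ^ k = 1) (h2 : ∀ m, 0 < m → m < k → σ ^ m ≠ 1) : orderOf (sperm σ z) = k := by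
  rw [orderOf_eq_iff hk]
  constructor
  · ext i j
    rw [sperm_pow_apply σ z hz, h1]
    have : (sgnAt σ z j) ^ k = 1 := by
      unfold sgnAt
      split_ifs
      · have : (Equiv.Perm.sign σ) ^ k = 1 := by rw [← map_pow, h1, map_one]
        rw [← Units.val_pow_eq_pow_val, this, Units.val_one]
      · simp
    rw [this]
    exact (Matrix.one_apply).symm
  · intro m hm hm0 h
    apply h2 m hm0 hm
    ext j
    have := congrArg (fun A => A.1 j j) h
    simp only [sperm_pow_apply σ z hz] at this
    by_contra hne
    rw [if_neg (fun h => hne (by rw [← h]; rfl))] at this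
    simp at this

lemma sperm_conj {n : ℕ} (σ : Equiv.Perm (Fin n)) (z : Fin n) {i j : Fin n} (h : i ≠ j) (x : ℤ) :
    sperm σ z * SpecialLinearGroup.transvection h x * (sperm σ z)⁻¹ =
      SpecialLinearGroup.transvection (σ.injective.ne h)
        (sgnAt σ z i * sgnAt σ z j * x) := by
  rw [mul_inv_eq_iff_eq_mul]
  apply Subtype.ext
  change (sperm σ z).1 * (1 + Matrix.single i j x) = (1 + Matrix.single (σ i) (σ j) _) * (sperm σ z).1
  rw [mul_add, add_mul, mul_one, one_mul]
  congr 1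
  ext a b
  have e := sgnAt_mul_self σ z j
  by_cases hb : b = j
  · subst hb
    rw [Matrix.mul_single_apply_same]
    by_cases ha : a = σ i
    · subst ha
      rw [Matrix.single_mul_apply_same]
      rw [sperm_apply, sperm_apply]
      simp only [if_true]
      linear_combination (- sgnAt σ z i * x) * e
    · rw [Matrix.single_mul_apply_of_ne _ _ _ _ _ ha]
      rw [sperm_apply]
      simp [ha]
  · rw [Matrix.mul_single_apply_of_ne _ _ _ _ _ hb]
    by_cases ha : a = σ i
    · subst ha
      rw [Matrix.single_mul_apply_same]
      rw [sperm_apply]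
      rw [if_neg (fun h => hb (σ.injective h).symm), mul_zero]
    · rw [Matrix.single_mul_apply_of_ne _ _ _ _ _ ha]

lemma comm_rel {n : ℕ} {i j l : Fin n} (hij : i ≠ j) (hjl : j ≠ l) (hil : i ≠ l) (x y : ℤ) :
    SpecialLinearGroup.transvection hij x * SpecialLinearGroup.transvection hjl y =
    SpecialLinearGroup.transvection hil (x * y) *
      (SpecialLinearGroup.transvection hjl y * SpecialLinearGroup.transvection hij x) := by
  apply Subtype.ext
  simp [SpecialLinearGroup.transvection_coe, mul_add, add_mul, Matrix.single_mul_single_same,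
    Matrix.single_mul_single_of_ne, hij, hjl, hil, hij.symm, hjl.symm, hil.symm]
  abel

lemma comm_rel2 {n : ℕ} {e0 e1 e2 e3 : Fin n} (h10 : e1 ≠ e0) (h20 : e2 ≠ e0) (h12 : e1 ≠ e2)
    (h13 : e1 ≠ e3) (h23 : e2 ≠ e3) (p q c d : ℤ) :
    (SpecialLinearGroup.transvection h12 p * SpecialLinearGroup.transvection h13 q) *
      (SpecialLinearGroup.transvection h10 d * SpecialLinearGroup.transvection h20 c) =
    SpecialLinearGroup.transvection h10 (p * c) *
      ((SpecialLinearGroup.transvection h10 d * SpecialLinearGroup.transvection h20 c) *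
      (SpecialLinearGroup.transvection h12 p * SpecialLinearGroup.transvection h13 q)) := by
  apply Subtype.ext
  simp [SpecialLinearGroup.transvection_coe, mul_add, add_mul, Matrix.single_mul_single_same,
    Matrix.single_mul_single_of_ne, h10, h20, h12, h13, h23, h10.symm, h20.symm, h12.symm,
    h13.symm, h23.symm, h23.symm]
  abel

/-- the map rotating consecutive blocks of length `k` starting at `s`, `m` of them. -/
def rotFun (k s m i : ℕ) : ℕ :=
  if s ≤ i ∧ i < s + m * k then s + k * ((i - s) / k) + ((i - s) % k + 1) % k else i

lemma rotFun_block {k s m q t : ℕ} (hk : 0 < k) (hq : q < m) (ht : t < k) :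
    rotFun k s m (s + k * q + t) = s + k * q + (t + 1) % k := by
  have h1 : s + k * q + t - s = t + k * q := by omega
  have h2 : k * q + k ≤ m * k := by nlinarith
  unfold rotFun
  rw [if_pos (by omega), h1, Nat.add_mul_div_left _ _ hk, Nat.add_mul_mod_self_left,
    Nat.div_eq_of_lt ht, Nat.mod_eq_of_lt ht, zero_add]

lemma rotFun_iter_block {k s m q t : ℕ} (hk : 0 < k) (hq : q < m) (ht : t < k) (j : ℕ) :
    (rotFun k s m)^[j] (s + k * q + t) = s + k * q + (t + j) % k := by
  induction j with
  | zero => simp [Nat.mod_eq_of_lt ht]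
  | succ j ih =>
    rw [Function.iterate_succ_apply', ih, rotFun_block hk hq (Nat.mod_lt _ hk), Nat.mod_add_mod,
      add_assoc t]

lemma rotFun_iter {k s m : ℕ} (hk : 0 < k) (i : ℕ) : (rotFun k s m)^[k] i = i := by
  by_cases h : s ≤ i ∧ i < s + m * k
  · have hq : (i - s) / k < m := by rw [Nat.div_lt_iff_lt_mul hk]; omega
    have e : i = s + k * ((i - s) / k) + (i - s) % k := by
      have := Nat.div_add_mod (i - s) k; omega
    have := rotFun_iter_block (s := s) hk hq (Nat.mod_lt (i - s) hk) k
    rw [← e] at this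
    rw [this, Nat.add_mod_right, Nat.mod_mod, ← e]
  · have : rotFun k s m i = i := by simp [rotFun, h]
    exact Function.iterate_fixed this k

lemma rotFun_lt {k s m n : ℕ} (hk : 0 < k) (hn : s + m * k ≤ n) {i : ℕ} (hi : i < n) :
    rotFun k s m i < n := by
  by_cases h : s ≤ i ∧ i < s + m * k
  · have hq : (i - s) / k < m := by rw [Nat.div_lt_iff_lt_mul hk]; omega
    have h2 : k * ((i - s) / k) + k ≤ m * k := by nlinarith
    have := Nat.mod_lt ((i - s) % k + 1) hk
    simp only [rotFun, h, and_self, if_true]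
    omega
  · simpa [rotFun, h] using hi

lemma exists_rot {k n s m : ℕ} (hk : 2 ≤ k) (hm : 0 < m) (hn : s + m * k ≤ n) :
    ∃ σ : Equiv.Perm (Fin n), σ ^ k = 1 ∧ (∀ j, 0 < j → j < k → σ ^ j ≠ 1) ∧
      (∀ i : Fin n, i.val < s ∨ s + m * k ≤ i.val → σ i = i) ∧
      (∀ i : Fin n, s ≤ i.val → i.val < s + m * k → (i.val - s) % k + 1 < k →
        (σ i).val = i.val + 1) := by
  have hk0 : 0 < k := by omega
  let F : Fin n → Fin n := fun i => ⟨rotFun k s m i, rotFun_lt hk0 hn i.2⟩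
  have hF : ∀ (j : ℕ) (i : Fin n), (F^[j] i).val = (rotFun k s m)^[j] i.val := by
    intro j i
    induction j with
    | zero => rfl
    | succ j ih => rw [Function.iterate_succ_apply', Function.iterate_succ_apply', ← ih]
  have hFk : ∀ i, F^[k] i = i := fun i => Fin.ext (by rw [hF, rotFun_iter hk0])
  have hk1 : k - 1 + 1 = k := by omega
  let σ : Equiv.Perm (Fin n) :=
    { toFun := F
      invFun := F^[k-1]
      left_inv := fun i => by
        rw [← Function.iterate_succ_apply, Nat.succ_eq_add_one, hk1, hFk]
      right_inv := fun i => by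
        rw [← Function.iterate_succ_apply' F, Nat.succ_eq_add_one, hk1, hFk] }
  have hσ : ∀ (j : ℕ) (i : Fin n), (σ ^ j) i = F^[j] i := by
    intro j i
    rw [← Equiv.Perm.iterate_eq_pow]; rfl
  have hmk : k ≤ m * k := Nat.le_mul_of_pos_left k hm
  refine ⟨σ, ?_, ?_, ?_, ?_⟩
  · ext i; rw [hσ, hFk]; rfl
  · intro j hj hjk h
    have h1 := hσ j ⟨s, by omega⟩
    rw [h] at h1
    have h2 := congrArg Fin.val h1
    rw [hF] at h2
    have h3 := rotFun_iter_block (s := s) hk0 hm hk0 j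
    simp only [Nat.mul_zero, Nat.add_zero, zero_add, Nat.mod_eq_of_lt hjk] at h3
    rw [h3] at h2
    simp at h2
    omega
  · intro i hi
    apply Fin.ext
    change rotFun k s m i.val = i.val
    rw [rotFun, if_neg (by omega)]
  · intro i h1 h2 h3
    change rotFun k s m i.val = i.val + 1
    rw [rotFun, if_pos ⟨h1, h2⟩, Nat.mod_eq_of_lt h3]
    have := Nat.div_add_mod (i.val - s) k
    omega

/-- `i = j` or the elementary matrix `E_{ij}` lies in `G`. -/
def ElemRel {n : ℕ} (G : Subgroup (SpecialLinearGroup (Fin n) ℤ)) (i j : Fin n) : Prop :=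
  ∀ h : i ≠ j, SpecialLinearGroup.transvection h (1 : ℤ) ∈ G

section rel
variable {n : ℕ} {G : Subgroup (SpecialLinearGroup (Fin n) ℤ)}

lemma tv_one_of_sq {i j : Fin n} (h : i ≠ j) {x : ℤ} (hx : x * x = 1)
    (hG : SpecialLinearGroup.transvection h x ∈ G) :
    SpecialLinearGroup.transvection h (1 : ℤ) ∈ G := by
  rcases mul_self_eq_one_iff.1 hx with rfl | rfl
  · exact hG
  · have := G.inv_mem hG
    rwa [SpecialLinearGroup.transvection_inv, neg_neg] at this

lemma ElemRel.refl (i : Fin n) : ElemRel G i i := fun h => absurd rfl h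

lemma ElemRel.trans {i j l : Fin n} (h1 : ElemRel G i j) (h2 : ElemRel G j l) : ElemRel G i l := by
  intro hil
  by_cases hij : i = j
  · subst hij; exact h2 hil
  by_cases hjl : j = l
  · subst hjl; exact h1 hil
  have e := comm_rel hij hjl hil 1 1
  rw [← mul_inv_eq_iff_eq_mul, one_mul] at e
  rw [← e]
  exact G.mul_mem (G.mul_mem (h1 hij) (h2 hjl)) (G.inv_mem (G.mul_mem (h2 hjl) (h1 hij)))

lemma ElemRel.conj {i j : Fin n} (h : ElemRel G i j) {σ : Equiv.Perm (Fin n)} {z : Fin n}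
    (hσ : sperm σ z ∈ G) : ElemRel G (σ i) (σ j) := by
  intro hne
  have hij : i ≠ j := fun e => hne (by rw [e])
  have := G.mul_mem (G.mul_mem hσ (h hij)) (G.inv_mem hσ)
  rw [sperm_conj] at this
  refine tv_one_of_sq _ ?_ this
  linear_combination (sgnAt σ z i * sgnAt σ z i) * sgnAt_mul_self σ z j + sgnAt_mul_self σ z i

lemma tv_all_of_one {i j : Fin n} (h : i ≠ j)
    (hG : SpecialLinearGroup.transvection h (1 : ℤ) ∈ G) (x : ℤ) :
    SpecialLinearGroup.transvection h x ∈ G := by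
  induction x using Int.induction_on with
  | zero => rw [SpecialLinearGroup.transvection_coeff_zero]; exact G.one_mem
  | succ m ih => rw [SpecialLinearGroup.transvection_add]; exact G.mul_mem ih hG
  | pred m ih =>
    rw [sub_eq_add_neg, SpecialLinearGroup.transvection_add]
    refine G.mul_mem ih ?_
    rw [← SpecialLinearGroup.transvection_inv]
    exact G.inv_mem hG

end rel

theorem SL_n_Z_generated_by_eight_elements_of_order_k
    (k n : ℕ) (hk : 5 ≤ k) (hn : 2 * (k - 1) ≤ n) :
    ∃ M₁ M₂ M₃ M₄ M₅ M₆ M₇ M₈ : Matrix.SpecialLinearGroup (Fin n) ℤ,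
      orderOf M₁ = k ∧ orderOf M₂ = k ∧ orderOf M₃ = k ∧ orderOf M₄ = k ∧
      orderOf M₅ = k ∧ orderOf M₆ = k ∧ orderOf M₇ = k ∧ orderOf M₈ = k ∧
      Subgroup.closure {M₁, M₂, M₃, M₄, M₅, M₆, M₇, M₈} = ⊤ := by
  have hk0 : 0 < k := by omega
  obtain ⟨m, hm⟩ : ∃ m, m = (n - 1) / k := ⟨_, rfl⟩
  obtain ⟨r, hr⟩ : ∃ r, r = (n - 1) % k := ⟨_, rfl⟩
  have hrk : r < k := by rw [hr]; exact Nat.mod_lt _ hk0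
  have hmr : m * k + r + 1 = n := by
    have := Nat.div_add_mod (n - 1) k
    rw [← hm, ← hr, mul_comm] at this
    omega
  have hm0 : 0 < m := by rw [hm]; exact Nat.div_pos (by omega) hk0
  have hmk : k ≤ m * k := Nat.le_mul_of_pos_left k hm0
  obtain ⟨α, hα1, hα2, hα3, hα4⟩ := exists_rot (k := k) (n := n) (s := 0) (m := m) (by omega) hm0 (by omega)
  obtain ⟨β, hβ1, hβ2, hβ3, hβ4⟩ := exists_rot (k := k) (n := n) (s := 1) (m := m) (by omega) hm0 (by omega)
  obtain ⟨γ, hγ1, hγ2, hγ3, hγ4⟩ := exists_rot (k := k) (n := n) (s := r + 1) (m := m) (by omega) hm0 (by omega)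
  obtain ⟨e0, he0⟩ : ∃ e : Fin n, e.val = 0 := ⟨⟨0, by omega⟩, rfl⟩
  obtain ⟨e1, he1⟩ : ∃ e : Fin n, e.val = 1 := ⟨⟨1, by omega⟩, rfl⟩
  obtain ⟨e2, he2⟩ : ∃ e : Fin n, e.val = 2 := ⟨⟨2, by omega⟩, rfl⟩
  obtain ⟨e3, he3⟩ : ∃ e : Fin n, e.val = 3 := ⟨⟨3, by omega⟩, rfl⟩
  obtain ⟨z, hz⟩ : ∃ e : Fin n, e.val = n - 1 := ⟨⟨n - 1, by omega⟩, rfl⟩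
  have hαz : α z = z := hα3 z (by omega)
  have hβ0 : β e0 = e0 := hβ3 e0 (by omega)
  have hγ0 : γ e0 = e0 := hγ3 e0 (by omega)
  have small : ∀ t, t < 3 → t % k + 1 < k := fun t ht => by
    rw [Nat.mod_eq_of_lt (by omega)]; omega
  have hα01 : α e0 = e1 := Fin.ext (by rw [hα4 e0 (by omega) (by omega) (small _ (by omega))]; omega)
  have hα12 : α e1 = e2 := Fin.ext (by rw [hα4 e1 (by omega) (by omega) (small _ (by omega))]; omega)
  have hα23 : α e2 = e3 := Fin.ext (by rw [hα4 e2 (by omega) (by omega) (small _ (by omega))]; omega)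
  have hβ12 : β e1 = e2 := Fin.ext (by rw [hβ4 e1 (by omega) (by omega) (small _ (by omega))]; omega)
  have n01 : e0 ≠ e1 := fun h => by rw [h] at he0; omega
  have n20 : e2 ≠ e0 := fun h => by rw [h] at he2; omega
  have n12 : e1 ≠ e2 := fun h => by rw [h] at he1; omega
  have n13 : e1 ≠ e3 := fun h => by rw [h] at he1; omega
  have n23 : e2 ≠ e3 := fun h => by rw [h] at he2; omega
  obtain ⟨A, hA⟩ : ∃ A, A = sperm α z := ⟨_, rfl⟩
  obtain ⟨B, hB⟩ : ∃ B, B = sperm β e0 := ⟨_, rfl⟩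
  obtain ⟨C, hC⟩ : ∃ C, C = sperm γ e0 := ⟨_, rfl⟩
  obtain ⟨T, hT⟩ : ∃ T, T = SpecialLinearGroup.transvection n01 (1 : ℤ) := ⟨_, rfl⟩
  obtain ⟨U, hU⟩ : ∃ U, U = SpecialLinearGroup.transvection n01.symm (1 : ℤ) := ⟨_, rfl⟩
  have oA : orderOf A = k := by rw [hA]; exact orderOf_sperm hk0 α z hαz hα1 hα2
  have oB : orderOf B = k := by rw [hB]; exact orderOf_sperm hk0 β e0 hβ0 hβ1 hβ2
  have oC : orderOf C = k := by rw [hC]; exact orderOf_sperm hk0 γ e0 hγ0 hγ1 hγ2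
  have oconj : ∀ S : SpecialLinearGroup (Fin n) ℤ, orderOf (S * B * S⁻¹) = k := by
    intro S
    rw [← oB]
    refine (SemiconjBy.orderOf_eq S ?_).symm
    simp [SemiconjBy]
  refine ⟨A, B, C, T * B * T⁻¹, U * B * U⁻¹, A, A, A, oA, oB, oC, oconj T, oconj U, oA, oA, oA, ?_⟩
  set G := Subgroup.closure
    ({A, B, C, T * B * T⁻¹, U * B * U⁻¹, A, A, A} : Set (SpecialLinearGroup (Fin n) ℤ)) with hG
  have gA : A ∈ G := Subgroup.subset_closure (by simp)
  have gB : B ∈ G := Subgroup.subset_closure (by simp)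
  have gC : C ∈ G := Subgroup.subset_closure (by simp)
  have gT : T * B * T⁻¹ ∈ G := Subgroup.subset_closure (by simp)
  have gU : U * B * U⁻¹ ∈ G := Subgroup.subset_closure (by simp)
  clear_value G
  -- `T` and `U` twisted by `B`
  obtain ⟨c, hc, hcT⟩ : ∃ c : ℤ, c * c = 1 ∧
      B * T⁻¹ * B⁻¹ = SpecialLinearGroup.transvection n20.symm c := by
    refine ⟨sgnAt β e0 e0 * sgnAt β e0 e1 * -1, ?_, ?_⟩
    rotate_left
    · rw [hB, hT, SpecialLinearGroup.transvection_inv, sperm_conj]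
      simp only [hβ0, hβ12]
    · linear_combination (sgnAt β e0 e0 * sgnAt β e0 e0) * sgnAt_mul_self β e0 e1
        + sgnAt_mul_self β e0 e0
  obtain ⟨d, hd, hdU⟩ : ∃ d : ℤ, d * d = 1 ∧
      B * U⁻¹ * B⁻¹ = SpecialLinearGroup.transvection n20 d := by
    refine ⟨sgnAt β e0 e1 * sgnAt β e0 e0 * -1, ?_, ?_⟩
    rotate_left
    · rw [hB, hU, SpecialLinearGroup.transvection_inv, sperm_conj]
      simp only [hβ0, hβ12]
    · linear_combination (sgnAt β e0 e0 * sgnAt β e0 e0) * sgnAt_mul_self β e0 e1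
        + sgnAt_mul_self β e0 e0
  have gX : T * SpecialLinearGroup.transvection n20.symm c ∈ G := by
    rw [← hcT]
    have := G.mul_mem gT (G.inv_mem gB)
    simpa only [mul_assoc] using this
  have gY : U * SpecialLinearGroup.transvection n20 d ∈ G := by
    rw [← hdU]
    have := G.mul_mem gU (G.inv_mem gB)
    simpa only [mul_assoc] using this
  obtain ⟨p, q, hp, gX'⟩ : ∃ p q : ℤ, p * p = 1 ∧
      SpecialLinearGroup.transvection n12 p * SpecialLinearGroup.transvection n13 q ∈ G := by
    have h := G.mul_mem (G.mul_mem gA gX) (G.inv_mem gA)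
    have e : A * (T * SpecialLinearGroup.transvection n20.symm c) * A⁻¹ =
      (A * T * A⁻¹) * (A * SpecialLinearGroup.transvection n20.symm c * A⁻¹) := by group
    rw [e, hA, hT, sperm_conj, sperm_conj] at h
    simp only [hα01, hα12, hα23] at h
    refine ⟨_, _, ?_, h⟩
    linear_combination (sgnAt α z e0 * sgnAt α z e0) * sgnAt_mul_self α z e1
        + sgnAt_mul_self α z e0
  have r10 : ElemRel G e1 e0 := by
    intro h
    have e := comm_rel2 n01.symm n20 n12 n13 n23 p q d 1
    rw [← hU, ← mul_inv_eq_iff_eq_mul] at e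
    refine tv_one_of_sq _ (x := p * d) (by linear_combination p * p * hd + hp) ?_
    rw [← e]
    exact G.mul_mem (G.mul_mem gX' gY) (G.inv_mem (G.mul_mem gY gX'))
  have r01 : ElemRel G e0 e1 := by
    have key : ∀ j, ElemRel G ((α ^ j) e0) e0 := by
      intro j
      induction j with
      | zero => exact ElemRel.refl _
      | succ j ih =>
        have h1 := ih.conj (hA ▸ gA)
        rw [hα01] at h1
        rw [pow_succ', Equiv.Perm.mul_apply]
        exact h1.trans r10
    have h := (key (k - 1)).conj (hA ▸ gA)
    rwa [← Equiv.Perm.mul_apply, ← pow_succ', Nat.sub_add_cancel (by omega), hα1, hα01] at h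
  have all : ∀ t, ∀ j : Fin n, j.val = t → ElemRel G e0 j ∧ ElemRel G j e0 := by
    intro t
    induction t with
    | zero =>
      intro j hj
      have : j = e0 := Fin.ext (by omega)
      rw [this]
      exact ⟨ElemRel.refl _, ElemRel.refl _⟩
    | succ t ih =>
      intro j hj
      obtain ⟨i, hi⟩ : ∃ i : Fin n, i.val = t := ⟨⟨t, by omega⟩, rfl⟩
      obtain ⟨ih1, ih2⟩ := ih i hi
      have step : ∃ (σ : Equiv.Perm (Fin n)) (y : Fin n), sperm σ y ∈ G ∧ σ i = j ∧
          (σ e0 = e0 ∨ σ e0 = e1) := by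
        by_cases h1 : t < m * k
        · by_cases h2 : t % k + 1 < k
          · exact ⟨α, z, hA ▸ gA, Fin.ext (by rw [hα4 i (by omega) (by omega) (by simpa [hi] using h2)]; omega),
              Or.inr hα01⟩
          · have h3 := Nat.mod_lt t hk0
            have h4 := Nat.div_add_mod t k
            refine ⟨β, e0, hB ▸ gB, Fin.ext ?_, Or.inl hβ0⟩
            rw [hβ4 i (by omega) (by omega) ?_]
            · omega
            · have h5 : i.val - 1 = (k - 2) + k * (t / k) := by omega
              rw [h5, Nat.add_mul_mod_self_left, Nat.mod_eq_of_lt (by omega)]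
              omega
        · refine ⟨γ, e0, hC ▸ gC, Fin.ext ?_, Or.inl hγ0⟩
          have h6 : i.val - (r + 1) = (t - m * k + k - (r + 1)) + k * (m - 1) := by
            obtain ⟨m', rfl⟩ : ∃ m', m = m' + 1 := ⟨m - 1, by omega⟩
            have : (m' + 1) * k = k * m' + k := by ring
            rw [Nat.add_sub_cancel]
            omega
          rw [hγ4 i (by omega) (by omega) ?_]
          · omega
          · rw [h6, Nat.add_mul_mod_self_left, Nat.mod_eq_of_lt (by omega)]
            omega
      obtain ⟨σ, y, hσG, hσi, hσ0⟩ := step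
      have c1 := ih1.conj hσG
      have c2 := ih2.conj hσG
      rw [hσi] at c1 c2
      rcases hσ0 with h | h <;> rw [h] at c1 c2
      · exact ⟨c1, c2⟩
      · exact ⟨r01.trans c1, c2.trans r10⟩
  apply eq_top_of_transvections
  intro i j h x
  exact tv_all_of_one h (((all i i rfl).2.trans (all j j rfl).1) h) x
end

section
/- Let k ≥ 5 and n ≥ 2(k − 1)(k − 3). Then there exist four matrices M₁, M₂, M₃, M₄ in the integral symplectic group Sp(2n, ℤ), each of order exactly k, such that the subgroup they generate is all of Sp(2n, ℤ). -/
section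

open Matrix

namespace SpGen

set_option linter.unusedSectionVars false
set_option linter.unusedSimpArgs false

variable {ι : Type*} [Fintype ι] [DecidableEq ι]

/-- The short root element `E i j c`: `x_j ↦ x_j + c x_i`, `y_i ↦ y_i - c y_j`. -/
def E (i j : ι) (h : i ≠ j) (c : ℤ) : symplecticGroup ι ℤ :=
  ⟨fromBlocks (1 + single i j c) 0 0 (1 - single j i c), by
    rw [SymplecticGroup.fromBlocks_mem_iff]
    simp [add_mul, mul_sub, h]⟩

/-- Upper unipotent elements. -/
def U (S : Matrix ι ι ℤ) (h : Sᵀ = S) : symplecticGroup ι ℤ :=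
  ⟨fromBlocks 1 S 0 1, by
    rw [SymplecticGroup.fromBlocks_mem_iff]
    simp [h]⟩

/-- Lower unipotent elements. -/
def L (S : Matrix ι ι ℤ) (h : Sᵀ = S) : symplecticGroup ι ℤ :=
  ⟨fromBlocks 1 0 S 1, by
    rw [SymplecticGroup.fromBlocks_mem_iff]
    simp [h]⟩

/-- The permutation matrix sending `e_j` to `e_{σ j}`. -/
def P (σ : Equiv.Perm ι) : Matrix ι ι ℤ := of fun i j => if i = σ j then 1 else 0

lemma P_mul (σ τ : Equiv.Perm ι) : P (σ * τ) = P σ * P τ := by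
  ext i j
  simp only [P, mul_apply, of_apply, mul_ite, mul_one, mul_zero, Finset.sum_ite_eq',
    Finset.mem_univ, if_true, Equiv.Perm.mul_apply]
  congr

lemma P_one : P (1 : Equiv.Perm ι) = 1 := by
  ext i j
  simp only [P, one_apply, of_apply, Equiv.Perm.one_apply]
  congr

lemma P_transpose (σ : Equiv.Perm ι) : (P σ)ᵀ = P σ⁻¹ := by
  ext i j
  simp only [P, transpose_apply, of_apply, Equiv.Perm.eq_inv_iff_eq]
  simp [eq_comm]

/-- Permutations as symplectic matrices. -/
def Φ : Equiv.Perm ι →* symplecticGroup ι ℤ where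
  toFun σ := ⟨fromBlocks (P σ) 0 0 (P σ), by
    rw [SymplecticGroup.fromBlocks_mem_iff]
    simp [P_transpose, ← P_mul, P_one]⟩
  map_one' := by
    apply Subtype.ext
    simp [P_one]
  map_mul' σ τ := by
    apply Subtype.ext
    simp [P_mul, fromBlocks_multiply]

lemma Φ_injective : Function.Injective (Φ (ι := ι)) := by
  intro σ τ h
  have h1 := congrArg Subtype.val h
  simp only [Φ, MonoidHom.coe_mk, OneHom.coe_mk, fromBlocks_inj] at h1
  ext j
  have h2 := congrFun (congrFun h1.1 (σ j)) j
  simp only [P, of_apply] at h2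
  by_contra h3
  simp [h3] at h2

/-- Long root elements. -/
def Ud (a : ι) (c : ℤ) : symplecticGroup ι ℤ := U (single a a c) (by simp)
/-- Long negative root elements. -/
def Ld (a : ι) (c : ℤ) : symplecticGroup ι ℤ := L (single a a c) (by simp)

lemma P_mul_single (σ : Equiv.Perm ι) (i j : ι) (c : ℤ) :
    P σ * single i j c = single (σ i) (σ j) c * P σ := by
  ext a b
  simp only [P, mul_apply, single_apply, of_apply]
  rw [Finset.sum_eq_single i, Finset.sum_eq_single (σ j)]
  · simp only [true_and, and_true, EmbeddingLike.apply_eq_iff_eq]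
    split_ifs <;> simp_all
  · intro x _ hx
    simp [Ne.symm hx]
  · simp
  · intro x _ hx
    simp [Ne.symm hx]
  · simp

lemma Φ_E (σ : Equiv.Perm ι) (i j : ι) (h : i ≠ j) (c : ℤ) :
    Φ σ * E i j h c * (Φ σ)⁻¹ = E (σ i) (σ j) (σ.injective.ne h) c := by
  rw [mul_inv_eq_iff_eq_mul]
  apply Subtype.ext
  simp [Φ, E, fromBlocks_multiply, mul_add, add_mul, mul_sub, sub_mul, P_mul_single]

lemma Φ_Ud (σ : Equiv.Perm ι) (i : ι) (c : ℤ) :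
    Φ σ * Ud i c * (Φ σ)⁻¹ = Ud (σ i) c := by
  rw [mul_inv_eq_iff_eq_mul]
  apply Subtype.ext
  simp [Φ, Ud, U, fromBlocks_multiply, P_mul_single]

lemma Φ_Ld (σ : Equiv.Perm ι) (i : ι) (c : ℤ) :
    Φ σ * Ld i c * (Φ σ)⁻¹ = Ld (σ i) c := by
  rw [mul_inv_eq_iff_eq_mul]
  apply Subtype.ext
  simp [Φ, Ld, L, fromBlocks_multiply, P_mul_single]

lemma E_E_comm {i j i' j' : ι} (h : i ≠ j) (h' : i' ≠ j') (h1 : j ≠ i') (h2 : j' ≠ i) (c d : ℤ) :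
    Commute (E i j h c) (E i' j' h' d) := by
  apply Subtype.ext
  simp [E, fromBlocks_multiply, mul_add, add_mul, mul_sub, sub_mul, h1, h2, h1.symm, h2.symm]
  constructor <;> abel

lemma E_Ud_comm {i j a : ι} (h : i ≠ j) (h1 : j ≠ a) (c d : ℤ) :
    Commute (E i j h c) (Ud a d) := by
  apply Subtype.ext
  simp [E, Ud, U, fromBlocks_multiply, mul_add, add_mul, mul_sub, sub_mul, h1, h1.symm]

lemma E_Ld_comm {i j a : ι} (h : i ≠ j) (h1 : i ≠ a) (c d : ℤ) :
    Commute (E i j h c) (Ld a d) := by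
  apply Subtype.ext
  simp [E, Ld, L, fromBlocks_multiply, mul_add, add_mul, mul_sub, sub_mul, h1, h1.symm]

lemma Ud_Ud_comm {a b : ι} (c d : ℤ) : Commute (Ud a c) (Ud b d) := by
  apply Subtype.ext
  simp [Ud, U, fromBlocks_multiply, add_comm]

lemma Ld_Ld_comm {a b : ι} (c d : ℤ) : Commute (Ld a c) (Ld b d) := by
  apply Subtype.ext
  simp [Ld, L, fromBlocks_multiply, add_comm]

lemma Ud_Ld_comm {a b : ι} (h : a ≠ b) (c d : ℤ) : Commute (Ud a c) (Ld b d) := by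
  apply Subtype.ext
  simp [Ud, U, Ld, L, fromBlocks_multiply, h, h.symm]

lemma E_add (i j : ι) (h : i ≠ j) (c d : ℤ) : E i j h c * E i j h d = E i j h (c + d) := by
  apply Subtype.ext
  simp [E, fromBlocks_multiply, mul_add, add_mul, mul_sub, sub_mul, h, h.symm, single_add]
  constructor <;> abel

lemma E_zero (i j : ι) (h : i ≠ j) : E i j h 0 = 1 := by
  apply Subtype.ext
  simp [E]

lemma E_inv (i j : ι) (h : i ≠ j) (c : ℤ) : (E i j h c)⁻¹ = E i j h (-c) := by
  rw [inv_eq_iff_mul_eq_one, E_add, add_neg_cancel, E_zero]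

lemma E_comm_rel {i j k : ι} (h : i ≠ j) (h' : j ≠ k) (h'' : i ≠ k) (c d : ℤ) :
    E i j h c * E j k h' d * (E i j h c)⁻¹ * (E j k h' d)⁻¹ = E i k h'' (c * d) := by
  rw [mul_inv_eq_iff_eq_mul, mul_inv_eq_iff_eq_mul]
  apply Subtype.ext
  simp [E, fromBlocks_multiply, mul_add, add_mul, mul_sub, sub_mul, h, h', h'', h.symm, h'.symm,
    h''.symm]
  constructor <;> (try rw [mul_comm d c]) <;> abel

lemma U_add (S T : Matrix ι ι ℤ) (hS : Sᵀ = S) (hT : Tᵀ = T) :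
    U S hS * U T hT = U (S + T) (by simp [hS, hT]) := by
  apply Subtype.ext
  simp [U, fromBlocks_multiply, add_comm]

lemma L_add (S T : Matrix ι ι ℤ) (hS : Sᵀ = S) (hT : Tᵀ = T) :
    L S hS * L T hT = L (S + T) (by simp [hS, hT]) := by
  apply Subtype.ext
  simp [L, fromBlocks_multiply]

lemma U_zero : U (0 : Matrix ι ι ℤ) (by simp) = 1 := by
  apply Subtype.ext
  simp [U]

lemma L_zero : L (0 : Matrix ι ι ℤ) (by simp) = 1 := by
  apply Subtype.ext
  simp [L]

lemma U_inv (S : Matrix ι ι ℤ) (hS : Sᵀ = S) : (U S hS)⁻¹ = U (-S) (by simp [hS]) := by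
  rw [inv_eq_iff_mul_eq_one, U_add]
  simp [U_zero]

lemma L_inv (S : Matrix ι ι ℤ) (hS : Sᵀ = S) : (L S hS)⁻¹ = L (-S) (by simp [hS]) := by
  rw [inv_eq_iff_mul_eq_one, L_add]
  simp [L_zero]

lemma E_U (i j : ι) (h : i ≠ j) (c : ℤ) (S : Matrix ι ι ℤ) (hS : Sᵀ = S) :
    E i j h c * U S hS * (E i j h c)⁻¹ =
      U ((1 + single i j c) * S * (1 + single i j c)ᵀ) (by simp [hS, Matrix.mul_assoc]) := by
  rw [mul_inv_eq_iff_eq_mul]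
  apply Subtype.ext
  simp [E, U, fromBlocks_multiply, mul_add, add_mul, mul_sub, Matrix.mul_assoc, h, h.symm]

lemma E_L (i j : ι) (h : i ≠ j) (c : ℤ) (S : Matrix ι ι ℤ) (hS : Sᵀ = S) :
    E i j h c * L S hS * (E i j h c)⁻¹ =
      L ((1 + single j i (-c)) * S * (1 + single j i (-c))ᵀ) (by simp [hS, Matrix.mul_assoc]) := by
  rw [mul_inv_eq_iff_eq_mul]
  apply Subtype.ext
  have hneg : ∀ x y : ι, single x y (-c) = -single x y c := by
    intro x y
    ext z w
    simp only [single_apply, Matrix.neg_apply]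
    split_ifs <;> simp
  simp [E, L, fromBlocks_multiply, mul_add, add_mul, sub_mul, Matrix.mul_assoc, h.symm, hneg]
  abel

/-- Symmetric matrices whose upper unipotent is in `G`. -/
def NU (G : Subgroup (symplecticGroup ι ℤ)) : AddSubgroup (Matrix ι ι ℤ) where
  carrier := {S | ∃ h, U S h ∈ G}
  add_mem' := by
    rintro S T ⟨h, hS⟩ ⟨h', hT⟩
    exact ⟨by simp [h, h'], by rw [← U_add S T h h']; exact mul_mem hS hT⟩
  zero_mem' := ⟨by simp, by rw [U_zero]; exact one_mem _⟩
  neg_mem' := by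
    rintro S ⟨h, hS⟩
    exact ⟨by simp [h], by rw [← U_inv S h]; exact inv_mem hS⟩

/-- Symmetric matrices whose lower unipotent is in `G`. -/
def NL (G : Subgroup (symplecticGroup ι ℤ)) : AddSubgroup (Matrix ι ι ℤ) where
  carrier := {S | ∃ h, L S h ∈ G}
  add_mem' := by
    rintro S T ⟨h, hS⟩ ⟨h', hT⟩
    exact ⟨by simp [h, h'], by rw [← L_add S T h h']; exact mul_mem hS hT⟩
  zero_mem' := ⟨by simp, by rw [L_zero]; exact one_mem _⟩
  neg_mem' := by
    rintro S ⟨h, hS⟩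
    exact ⟨by simp [h], by rw [← L_inv S h]; exact inv_mem hS⟩

/-- The rank one symmetric matrix `v vᵀ`. -/
def q (v : ι → ℤ) : Matrix ι ι ℤ := vecMulVec v v

lemma conj_q (t : Matrix ι ι ℤ) (v : ι → ℤ) : t * q v * tᵀ = q (t *ᵥ v) := by
  ext i j
  simp [q, mul_vecMulVec, vecMulVec_mul, vecMul_transpose]

lemma N_lemma (N : AddSubgroup (Matrix ι ι ℤ))
    (hN : ∀ i j, i ≠ j → ∀ c : ℤ, ∀ S ∈ N, (1 + single i j c) * S * (1 + single i j c)ᵀ ∈ N)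
    (a e f : ι) (hae : a ≠ e) (haf : a ≠ f) (hef : e ≠ f)
    (h1 : q (Pi.single a 1 + Pi.single e 1) - q (Pi.single a 1) ∈ N) :
    ∀ x, single x x 1 ∈ N := by
  have key : ∀ i j, i ≠ j → ∀ c : ℤ, ∀ v w, q v - q w ∈ N →
      q (v + (c * v j) • Pi.single i 1) - q (w + (c * w j) • Pi.single i 1) ∈ N := by
    intro i j hij c v w h
    have h2 := hN i j hij c _ h
    rw [mul_sub, sub_mul, conj_q, conj_q] at h2
    convert h2 using 3 <;>
    · rw [add_mulVec, one_mulVec, single_mulVec]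
      congr 1
      ext x
      by_cases hx : x = i
      · subst hx; simp
      · simp [hx]
  have h2 := key f e hef.symm 1 _ _ h1
  have h3 := key e f hef (-1) _ _ h2
  simp [hae, hef, hae.symm, haf.symm, hef.symm] at h2 h3
  have h4 := N.sub_mem (N.sub_mem h2 h1) h3
  have h5 := hN a f haf 1 _ h4
  simp only [mul_sub, sub_mul, conj_q] at h5
  have h6 := N.sub_mem h1 (N.sub_mem h5 h4)
  have tv : ∀ v : ι → ℤ, (1 + single a f (1 : ℤ)) *ᵥ v = v + v f • Pi.single a 1 := by
    intro v
    rw [add_mulVec, one_mulVec, single_mulVec]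
    congr 1
    ext x
    by_cases hx : x = a
    · subst hx; simp
    · simp [hx]
  simp only [tv] at h6
  have h7 : q (Pi.single e 1) - q (0 : ι → ℤ) ∈ N := by
    convert h6 using 1
    ext x y
    simp [q, vecMulVec_apply, haf, hef, haf.symm, hef.symm]
    ring
  intro x
  have h8 : q (Pi.single x 1) - q (0 : ι → ℤ) ∈ N := by
    by_cases hx : x = e
    · rw [hx]; exact h7
    · have h9 := key e x (Ne.symm hx) (-1) _ _ (key x e hx 1 _ _ h7)
      simpa [hx, Ne.symm hx] using h9
  convert h8 using 1
  ext y z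
  simp only [q, vecMulVec_apply, single_apply, Matrix.sub_apply, Pi.single_apply, Pi.zero_apply]
  by_cases hy : y = x <;> by_cases hz : z = x <;> simp [hy, hz, eq_comm (a := x)]

end SpGen

end


section

open Matrix

namespace SpGen

set_option linter.unusedSectionVars false
set_option linter.unusedSimpArgs false

variable {ι : Type*} [Fintype ι] [DecidableEq ι]

/-- The symplectic form. -/
def B (x y : ι ⊕ ι → ℤ) : ℤ := x ⬝ᵥ (J ι ℤ *ᵥ y)

lemma B_add_left (x y z : ι ⊕ ι → ℤ) : B (x + y) z = B x z + B y z := by simp [B]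
lemma B_add_right (x y z : ι ⊕ ι → ℤ) : B x (y + z) = B x y + B x z := by simp [B, mulVec_add]
lemma B_sub_right (x y z : ι ⊕ ι → ℤ) : B x (y - z) = B x y - B x z := by simp [B, mulVec_sub]
lemma B_smul_left (c : ℤ) (x z : ι ⊕ ι → ℤ) : B (c • x) z = c * B x z := by
  rw [B, smul_dotProduct, smul_eq_mul, B]
lemma B_smul_right (c : ℤ) (x z : ι ⊕ ι → ℤ) : B x (c • z) = c * B x z := by
  rw [B, mulVec_smul, dotProduct_smul, smul_eq_mul, B]

lemma B_symm (x y : ι ⊕ ι → ℤ) : B y x = - B x y := by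
  unfold B
  rw [dotProduct_mulVec, ← mulVec_transpose, J_transpose, neg_mulVec, neg_dotProduct,
    dotProduct_comm]

lemma B_self (x : ι ⊕ ι → ℤ) : B x x = 0 := by
  have := B_symm x x
  omega

lemma B_inl (x : ι ⊕ ι → ℤ) (i : ι) : B x (Pi.single (Sum.inl i) 1) = x (Sum.inr i) := by
  simp [B, J, dotProduct, fromBlocks, one_apply]

lemma B_inr (x : ι ⊕ ι → ℤ) (i : ι) : B x (Pi.single (Sum.inr i) 1) = - x (Sum.inl i) := by
  simp [B, J, dotProduct, fromBlocks, one_apply]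

lemma B_mulVec (g : symplecticGroup ι ℤ) (x y : ι ⊕ ι → ℤ) :
    B (g.1 *ᵥ x) (g.1 *ᵥ y) = B x y := by
  have h := SymplecticGroup.mem_iff'.1 g.2
  unfold B
  conv_rhs => rw [← h]
  rw [← mulVec_mulVec, ← mulVec_mulVec, dotProduct_mulVec x, vecMul_transpose]

lemma mem_of_B (M : Matrix (ι ⊕ ι) (ι ⊕ ι) ℤ) (h : ∀ x y, B (M *ᵥ x) (M *ᵥ y) = B x y) :
    M ∈ symplecticGroup ι ℤ := by
  rw [SymplecticGroup.mem_iff']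
  ext p r
  have h1 := h (Pi.single p 1) (Pi.single r 1)
  unfold B at h1
  rw [← vecMul_transpose, ← dotProduct_mulVec, mulVec_mulVec, mulVec_mulVec] at h1
  simpa [Matrix.mul_assoc] using h1

lemma ext_vec {g h : symplecticGroup ι ℤ} (H : ∀ v, g.1 *ᵥ v = h.1 *ᵥ v) : g = h := by
  apply Subtype.ext
  ext p r
  have := congrFun (H (Pi.single r 1)) p
  simpa using this

lemma tmat (c : ℤ) (u v : ι ⊕ ι → ℤ) :
    (1 + c • vecMulVec u (J ι ℤ *ᵥ u)) *ᵥ v = v + (c * B v u) • u := by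
  rw [add_mulVec, one_mulVec, smul_mulVec, vecMulVec_mulVec]
  congr 1
  ext x
  simp [B, dotProduct_comm v]
  ring

/-- Symplectic transvections. -/
def T (c : ℤ) (u : ι ⊕ ι → ℤ) : symplecticGroup ι ℤ :=
  ⟨1 + c • vecMulVec u (J ι ℤ *ᵥ u), by
    apply mem_of_B
    intro x y
    rw [tmat, tmat]
    simp only [B_add_left, B_add_right, B_smul_left, B_smul_right, B_self, B_symm y u]
    ring⟩

lemma T_mulVec (c : ℤ) (u v : ι ⊕ ι → ℤ) : (T c u).1 *ᵥ v = v + (c * B v u) • u := tmat c u v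

lemma T_conj (g : symplecticGroup ι ℤ) (c : ℤ) (u : ι ⊕ ι → ℤ) :
    g * T c u * g⁻¹ = T c (g.1 *ᵥ u) := by
  rw [mul_inv_eq_iff_eq_mul]
  apply ext_vec
  intro v
  simp only [Submonoid.coe_mul, ← mulVec_mulVec, T_mulVec, B_mulVec, mulVec_add, mulVec_smul]

lemma Ud_mulVec (i : ι) (c : ℤ) (v : ι ⊕ ι → ℤ) :
    (Ud i c).1 *ᵥ v = Function.update v (Sum.inl i) (v (Sum.inl i) + c * v (Sum.inr i)) := by
  ext p
  rcases p with x | x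
  · by_cases hx : x = i
    · subst hx
      simp [Ud, U, fromBlocks_mulVec, single_mulVec]
    · simp [Ud, U, fromBlocks_mulVec, single_mulVec, hx]
  · simp [Ud, U, fromBlocks_mulVec]

lemma Ld_mulVec (i : ι) (c : ℤ) (v : ι ⊕ ι → ℤ) :
    (Ld i c).1 *ᵥ v = Function.update v (Sum.inr i) (v (Sum.inr i) + c * v (Sum.inl i)) := by
  ext p
  rcases p with x | x
  · simp [Ld, L, fromBlocks_mulVec]
  · by_cases hx : x = i
    · subst hx
      simp [Ld, L, fromBlocks_mulVec, single_mulVec, add_comm]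
    · simp [Ld, L, fromBlocks_mulVec, single_mulVec, hx]

lemma E_mulVec (i j : ι) (h : i ≠ j) (c : ℤ) (v : ι ⊕ ι → ℤ) :
    (E i j h c).1 *ᵥ v = Function.update (Function.update v (Sum.inl i)
      (v (Sum.inl i) + c * v (Sum.inl j))) (Sum.inr j) (v (Sum.inr j) - c * v (Sum.inr i)) := by
  ext p
  rcases p with x | x
  · by_cases hx : x = i
    · subst hx
      simp [E, fromBlocks_mulVec, single_mulVec, add_mulVec, sub_mulVec]
    · simp [E, fromBlocks_mulVec, single_mulVec, hx, add_mulVec, sub_mulVec]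
  · by_cases hx : x = j
    · subst hx
      simp [E, fromBlocks_mulVec, single_mulVec, add_mulVec, sub_mulVec]
    · simp [E, fromBlocks_mulVec, single_mulVec, hx, add_mulVec, sub_mulVec]

/-- The index of a coordinate. -/
def idx : ι ⊕ ι → ι := Sum.elim id id

/-- Elements fixing all basis vectors with index outside `S`. -/
def Supp (S : Set ι) : Subgroup (symplecticGroup ι ℤ) where
  carrier := {g | ∀ p, idx p ∉ S → g.1 *ᵥ Pi.single p 1 = Pi.single p 1}
  mul_mem' := by
    intro a b ha hb p hp
    rw [Submonoid.coe_mul, ← mulVec_mulVec, hb p hp, ha p hp]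
  one_mem' := by
    intro p hp
    exact one_mulVec _
  inv_mem' := by
    intro a ha p hp
    conv_lhs => rw [← ha p hp]
    rw [mulVec_mulVec, ← Submonoid.coe_mul, inv_mul_cancel]
    exact one_mulVec _

lemma Supp_row {S : Set ι} {g : symplecticGroup ι ℤ} (hg : g ∈ Supp S) (p : ι ⊕ ι)
    (hp : idx p ∉ S) (v : ι ⊕ ι → ℤ) : (g.1 *ᵥ v) p = v p := by
  rcases p with i | i
  · have h := B_mulVec g v (Pi.single (Sum.inr i) 1)
    rw [hg (Sum.inr i) hp, B_inr, B_inr] at h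
    omega
  · have h := B_mulVec g v (Pi.single (Sum.inl i) 1)
    rwa [hg (Sum.inl i) hp, B_inl, B_inl] at h

lemma upd_single {p r : ι ⊕ ι} (h : p ≠ r) : 
    Function.update (Pi.single p 1 : ι ⊕ ι → ℤ) r 0 = Pi.single p 1 := by
  apply Function.update_eq_self_iff.2
  simp [h.symm]

lemma Ud_Supp {S : Set ι} {i : ι} (h : i ∈ S) (c : ℤ) : Ud i c ∈ Supp S := by
  rintro (x | x) hp <;> have hx : i ≠ x := (by rintro rfl; exact hp h)
  · rw [Ud_mulVec, Function.update_eq_self_iff]; simp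
  · rw [Ud_mulVec, Function.update_eq_self_iff]; simp [hx]

lemma Ld_Supp {S : Set ι} {i : ι} (h : i ∈ S) (c : ℤ) : Ld i c ∈ Supp S := by
  rintro (x | x) hp <;> have hx : i ≠ x := (by rintro rfl; exact hp h)
  · rw [Ld_mulVec, Function.update_eq_self_iff]; simp [hx]
  · rw [Ld_mulVec, Function.update_eq_self_iff]; simp

lemma E_Supp {S : Set ι} {i j : ι} (hij : i ≠ j) (h : i ∈ S) (h' : j ∈ S) (c : ℤ) :
    E i j hij c ∈ Supp S := by
  rintro (x | x) hp <;> have hx : i ≠ x := (by rintro rfl; exact hp h) <;>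
    have hx' : j ≠ x := (by rintro rfl; exact hp h')
  · rw [E_mulVec]; ext y; simp [Function.update_apply, hx, hx', Pi.single_apply]
    aesop
  · rw [E_mulVec]; ext y; simp [Function.update_apply, hx, hx', Pi.single_apply]
    aesop

/-- Weights of coordinates. -/
def wt (i : ι) : ι ⊕ ι → ℕ
  | Sum.inl j => if j = i then 1 else 2
  | Sum.inr _ => 3

/-- The measure for the Euclidean algorithm. -/
def mm (i : ι) (v : ι ⊕ ι → ℤ) : ℕ := ∑ p, wt i p * (v p).natAbs

lemma mm_update (i : ι) (v : ι ⊕ ι → ℤ) (p : ι ⊕ ι) (x : ℤ) :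
    mm i (Function.update v p x) + wt i p * (v p).natAbs = mm i v + wt i p * x.natAbs := by
  unfold mm
  rw [← Finset.add_sum_erase _ _ (Finset.mem_univ p),
    ← Finset.add_sum_erase (a := p) _ (fun p => wt i p * (v p).natAbs) (Finset.mem_univ p)]
  have : ∑ r ∈ Finset.univ.erase p, wt i r * (Function.update v p x r).natAbs =
      ∑ r ∈ Finset.univ.erase p, wt i r * (v r).natAbs := by
    apply Finset.sum_congr rfl
    intro r hr
    rw [Function.update_of_ne (Finset.ne_of_mem_erase hr)]
  rw [this]
  simp
  ring

lemma wt_pos (i : ι) (p : ι ⊕ ι) : 0 < wt i p := by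
  rcases p with j | j
  · simp only [wt]; split_ifs <;> simp
  · simp [wt]

lemma pair_red (i : ι) (K : Subgroup (symplecticGroup ι ℤ)) (Inv : (ι ⊕ ι → ℤ) → Prop)
    (p r : ι ⊕ ι) (hpr : p ≠ r) (hw : wt i p < wt i r)
    (op1 : ∀ v, Inv v → ∀ s : ℤ, ∃ g ∈ K, g.1 *ᵥ v = Function.update v p (v p + s * v r))
    (op2 : ∀ v, Inv v → ∀ s : ℤ, ∃ g ∈ K, g.1 *ᵥ v = Function.update v r (v r + s * v p))
    (inv1 : ∀ v, Inv v → ∀ x, Inv (Function.update v p x))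
    (v : ι ⊕ ι → ℤ) (hv : Inv v) (h0 : v r ≠ 0) :
    ∃ x y : ℤ, (∃ g ∈ K, g.1 *ᵥ v = Function.update (Function.update v p x) r y) ∧
      mm i (Function.update (Function.update v p x) r y) < mm i v := by
  have red : ∀ a b : ℤ, b ≠ 0 → b.natAbs ≤ a.natAbs → ∃ s : ℤ, (a + s * b).natAbs < a.natAbs := by
    intro a b hb hab
    by_cases hs : 0 < a ↔ 0 < b
    · exact ⟨-1, by omega⟩
    · exact ⟨1, by omega⟩
  by_cases h1 : (v r).natAbs ≤ (v p).natAbs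
  · obtain ⟨s, hs⟩ := red _ _ h0 h1
    refine ⟨v p + s * v r, v r, ?_, ?_⟩
    · obtain ⟨g, hg, hgv⟩ := op1 v hv s
      refine ⟨g, hg, ?_⟩
      rw [hgv, Eq.comm, Function.update_eq_self_iff, Function.update_of_ne hpr.symm]
    · rw [Function.update_eq_self_iff.2 (by rw [Function.update_of_ne hpr.symm])]
      have h2 := mm_update i v p (v p + s * v r)
      have h3 := Nat.mul_lt_mul_of_pos_left hs (wt_pos i p)
      omega
  · by_cases h2 : v p = 0
    · refine ⟨v r, 0, ?_, ?_⟩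
      · obtain ⟨g, hg, hgv⟩ := op1 v hv 1
        obtain ⟨g', hg', hgv'⟩ := op2 _ (inv1 v hv (v r)) (-1)
        refine ⟨g' * g, mul_mem hg' hg, ?_⟩
        rw [Submonoid.coe_mul, ← mulVec_mulVec, hgv]
        simp only [h2, zero_add, one_mul]
        rw [hgv']
        simp [hpr, hpr.symm]
      · have h3 := mm_update i (Function.update v p (v r)) r 0
        have h4 := mm_update i v p (v r)
        rw [Function.update_of_ne hpr.symm] at h3
        rw [h2] at h4
        have h5 := Nat.mul_lt_mul_of_pos_right hw (Int.natAbs_pos.2 h0)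
        simp at h3 h4
        omega
    · obtain ⟨s, hs⟩ := red (v r) (v p) h2 (by omega)
      refine ⟨v p, v r + s * v p, ?_, ?_⟩
      · obtain ⟨g, hg, hgv⟩ := op2 v hv s
        refine ⟨g, hg, ?_⟩
        rw [hgv, Function.update_eq_self]
      · rw [Function.update_eq_self]
        have h2 := mm_update i v r (v r + s * v p)
        have h3 := Nat.mul_lt_mul_of_pos_left hs (wt_pos i r)
        omega

lemma reduce (G : Subgroup (symplecticGroup ι ℤ)) (hE : ∀ i j h c, E i j h c ∈ G)
    (hU : ∀ i c, Ud i c ∈ G) (hL : ∀ i c, Ld i c ∈ G) (S : Set ι) (i : ι) (hi : i ∈ S) :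
    ∀ (N : ℕ) (v : ι ⊕ ι → ℤ), mm i v ≤ N → (∀ p, idx p ∉ S → v p = 0) →
      ∃ g ∈ G ⊓ Supp S, ∃ c : ℤ, g.1 *ᵥ v = c • Pi.single (Sum.inl i) 1 := by
  intro N
  induction N using Nat.strong_induction_on with
  | _ N ih =>
  intro v hm hv
  have fin : ∀ p r, idx p ∈ S → idx r ∈ S → (∃ x y : ℤ, (∃ g ∈ G ⊓ Supp S,
      g.1 *ᵥ v = Function.update (Function.update v p x) r y) ∧
      mm i (Function.update (Function.update v p x) r y) < mm i v) →
      ∃ g ∈ G ⊓ Supp S, ∃ c : ℤ, g.1 *ᵥ v = c • Pi.single (Sum.inl i) 1 := by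
    rintro p r hp hr ⟨x, y, ⟨g, hg, hgv⟩, hlt⟩
    obtain ⟨g', hg', c, hc⟩ := ih _ (lt_of_lt_of_le hlt hm) _ le_rfl (by
      intro z hz
      rw [Function.update_of_ne (by rintro rfl; exact hz hr),
        Function.update_of_ne (by rintro rfl; exact hz hp), hv z hz])
    refine ⟨g' * g, mul_mem hg' hg, c, ?_⟩
    rw [Submonoid.coe_mul, ← mulVec_mulVec, hgv, hc]
  by_cases hA : ∃ j, v (Sum.inr j) ≠ 0
  · obtain ⟨j, hj⟩ := hA
    have hjS : j ∈ S := by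
      by_contra h
      exact hj (hv (Sum.inr j) h)
    apply fin (Sum.inl j) (Sum.inr j) hjS hjS
    apply pair_red i (G ⊓ Supp S) (fun _ => True) _ _ (by simp)
    · simp only [wt]; split_ifs <;> simp
    · intro v _ s
      exact ⟨Ud j s, ⟨hU _ _, Ud_Supp hjS s⟩, Ud_mulVec _ _ _⟩
    · intro v _ s
      exact ⟨Ld j s, ⟨hL _ _, Ld_Supp hjS s⟩, Ld_mulVec _ _ _⟩
    · simp
    · trivial
    · exact hj
  · push Not at hA
    by_cases hB : ∃ j, j ≠ i ∧ v (Sum.inl j) ≠ 0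
    · obtain ⟨j, hji, hj⟩ := hB
      have hjS : j ∈ S := by
        by_contra h
        exact hj (hv (Sum.inl j) h)
      apply fin (Sum.inl i) (Sum.inl j) hi hjS
      apply pair_red i (G ⊓ Supp S) (fun v => ∀ j, v (Sum.inr j) = 0) _ _ (by simp [hji.symm])
      · simp [wt, hji]
      · intro v h0 s
        refine ⟨E i j hji.symm s, ⟨hE _ _ _ _, E_Supp _ hi hjS s⟩, ?_⟩
        rw [E_mulVec, Function.update_eq_self_iff]
        simp [h0]
      · intro v h0 s
        refine ⟨E j i hji s, ⟨hE _ _ _ _, E_Supp _ hjS hi s⟩, ?_⟩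
        rw [E_mulVec, Function.update_eq_self_iff]
        simp [h0]
      · intro v h0 x l
        simp [h0]
      · exact hA
      · exact hj
    · push Not at hB
      refine ⟨1, one_mem _, v (Sum.inl i), ?_⟩
      ext p
      rcases p with x | x
      · by_cases hx : x = i
        · simp [hx]
        · simp [hx, hB x hx]
      · simp [hA x]

lemma T_inl (i : ι) (c d : ℤ) : T c (d • Pi.single (Sum.inl i) 1) = Ud i (c * d ^ 2) := by
  apply ext_vec
  intro v
  rw [T_mulVec, Ud_mulVec, B_smul_right, B_inl]
  ext p
  by_cases hp : p = Sum.inl i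
  · subst hp
    simp
    ring
  · simp [hp]

lemma T_mem (G : Subgroup (symplecticGroup ι ℤ)) (hE : ∀ i j h c, E i j h c ∈ G)
    (hU : ∀ i c, Ud i c ∈ G) (hL : ∀ i c, Ld i c ∈ G) (i : ι) (c : ℤ) (u : ι ⊕ ι → ℤ) :
    T c u ∈ G := by
  obtain ⟨g, hg, d, hd⟩ := reduce G hE hU hL Set.univ i (Set.mem_univ _) _ u le_rfl (by simp)
  have h1 := T_conj g c u
  rw [hd, T_inl] at h1
  have h2 : T c u = g⁻¹ * Ud i (c * d ^ 2) * g := by rw [← h1]; group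
  rw [h2]
  exact mul_mem (mul_mem (inv_mem hg.1) (hU _ _)) hg.1

lemma T_Supp (S : Set ι) (c : ℤ) (u : ι ⊕ ι → ℤ) (hu : ∀ p, idx p ∉ S → u p = 0) :
    T c u ∈ Supp S := by
  rintro (x | x) hp
  · rw [T_mulVec, B_symm, B_inl, hu (Sum.inr x) hp]; simp
  · rw [T_mulVec, B_symm, B_inr, hu (Sum.inl x) hp]; simp

theorem gen (G : Subgroup (symplecticGroup ι ℤ)) (hE : ∀ i j h c, E i j h c ∈ G)
    (hU : ∀ i c, Ud i c ∈ G) (hL : ∀ i c, Ld i c ∈ G) : G = ⊤ := by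
  have main : ∀ S : Finset ι, ∀ M ∈ Supp (S : Set ι), M ∈ G := by
    intro S
    induction S using Finset.induction_on with
    | empty =>
      intro M hM
      have : M = 1 := by
        apply Subtype.ext
        ext p r
        have := congrFun (hM r (by simp)) p
        simpa [one_apply, Pi.single_apply] using this
      rw [this]
      exact one_mem _
    | insert i S hiS ih =>
      intro M hM
      set S' : Set ι := ((insert i S : Finset ι) : Set ι) with hS'
      have hi : i ∈ S' := by simp [hS']
      set x : ι ⊕ ι → ℤ := Pi.single (Sum.inl i) 1 with hx
      set y : ι ⊕ ι → ℤ := Pi.single (Sum.inr i) 1 with hy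
      have suppx : ∀ p, idx p ∉ S' → x p = 0 := by
        intro p hp
        have : p ≠ Sum.inl i := by rintro rfl; exact hp hi
        simp [hx, this]
      have suppy : ∀ p, idx p ∉ S' → y p = 0 := by
        intro p hp
        have : p ≠ Sum.inr i := by rintro rfl; exact hp hi
        simp [hy, this]
      have Byx : B y x = 1 := by rw [hx, B_inl]; simp [hy]
      have Bxy : B x y = -1 := by rw [B_symm y x, Byx]
      -- step 1
      have step1 : ∃ g ∈ G ⊓ Supp S', g.1 *ᵥ (M.1 *ᵥ x) = x := by
        obtain ⟨g, hg, c, hc⟩ := reduce G hE hU hL S' i hi _ (M.1 *ᵥ x) le_rfl (by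
          intro p hp
          rw [Supp_row hM p hp, suppx p hp])
        rw [← hx] at hc
        have h1 : B (g.1 *ᵥ (M.1 *ᵥ y)) (g.1 *ᵥ (M.1 *ᵥ x)) = 1 := by
          rw [B_mulVec, B_mulVec, Byx]
        rw [hc, B_smul_right] at h1
        rcases Int.eq_one_or_neg_one_of_mul_eq_one h1 with h2 | h2
        · exact ⟨g, hg, by rw [hc, h2, one_smul]⟩
        · have hT : ∀ u, (∀ p, idx p ∉ S' → u p = 0) → T 1 u ∈ G ⊓ Supp S' :=
            fun u hu => ⟨T_mem G hE hU hL i 1 u, T_Supp S' 1 u hu⟩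
          refine ⟨T 1 y * (T 1 x * (T 1 x * (T 1 y * g))), ?_, ?_⟩
          · exact mul_mem (hT _ suppy) (mul_mem (hT _ suppx) (mul_mem (hT _ suppx)
              (mul_mem (hT _ suppy) hg)))
          · simp only [Submonoid.coe_mul, ← mulVec_mulVec, hc, h2, T_mulVec, B_add_left,
              B_smul_left, B_self, Bxy, Byx]
            module
      obtain ⟨g, hg, hgx⟩ := step1
      set w := g.1 *ᵥ (M.1 *ᵥ y) with hw
      have Bwx : B w x = 1 := by
        conv_lhs => rw [← hgx]
        rw [hw, B_mulVec, B_mulVec, Byx]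
      have suppw : ∀ p, idx p ∉ S' → w p = 0 := by
        intro p hp
        rw [hw, Supp_row hg.2 p hp, Supp_row hM p hp, suppy p hp]
      set m := -1 - B y w with hm
      set u := w + m • x - y with hu
      have suppu : ∀ p, idx p ∉ S' → u p = 0 := by
        intro p hp
        simp [hu, suppw p hp, suppx p hp, suppy p hp]
      have Bxw : B x w = -1 := by rw [B_symm w x, Bwx]
      have Bxu : B x u = 0 := by
        rw [hu, B_sub_right, B_add_right, B_smul_right, B_self, Bxy, Bxw]; ring
      have Bwu : B (w + m • x) u = -1 := by
        rw [hu, B_sub_right, B_self, B_symm y, B_add_right, B_smul_right, Byx, hm]; ring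
      have hh : T 1 u * T m x ∈ G ⊓ Supp S' := mul_mem
        ⟨T_mem G hE hU hL i 1 u, T_Supp S' 1 u suppu⟩ ⟨T_mem G hE hU hL i m x, T_Supp S' m x suppx⟩
      have hM2 : T 1 u * T m x * g * M ∈ Supp S' :=
        mul_mem (mul_mem hh.2 hg.2) hM
      have hfin : T 1 u * T m x * g * M ∈ Supp (S : Set ι) := by
        have fx : (T 1 u * T m x * g * M).1 *ᵥ x = x := by
          simp only [Submonoid.coe_mul, ← mulVec_mulVec, hgx, T_mulVec, B_self, Bxu, mul_zero,
            zero_smul, add_zero]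
        have fy : (T 1 u * T m x * g * M).1 *ᵥ y = y := by
          simp only [Submonoid.coe_mul, ← mulVec_mulVec]
          rw [← hw, T_mulVec m x w, Bwx, mul_one, T_mulVec, Bwu, hu]
          module
        intro p hp
        by_cases hpi : idx p = i
        · rcases p with j | j
          · have : j = i := hpi
            subst this
            exact fx
          · have : j = i := hpi
            subst this
            exact fy
        · apply hM2
          simp [hS', hpi]
          simpa using hp
      have h3 := ih _ hfin
      have h4 : M = (T 1 u * T m x * g)⁻¹ * (T 1 u * T m x * g * M) := by group
      rw [h4]
      exact mul_mem (inv_mem (mul_mem hh.1 hg.1)) h3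
  rw [eq_top_iff]
  intro M _
  apply main Finset.univ
  intro p hp
  simp at hp

end SpGen

end


section

open Matrix

namespace SpGen

set_option linter.unusedSectionVars false
set_option linter.unusedSimpArgs false

variable {ι : Type*} [Fintype ι] [DecidableEq ι]

lemma comm_rel {G : Type*} [Group G] {e r e' r' : G} (h2 : Commute r e')
    (h3 : Commute r r') (h4 : Commute r' e) :
    (e * r) * (e' * r') * (e * r)⁻¹ * (e' * r')⁻¹ = e * e' * e⁻¹ * e'⁻¹ := by
  rw [mul_inv_eq_iff_eq_mul, mul_inv_eq_iff_eq_mul]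
  calc e * r * (e' * r') = e * (r * e') * r' := by group
    _ = e * e' * (r * r') := by rw [h2.eq]; group
    _ = e * e' * (r' * r) := by rw [h3.eq]
    _ = e * e' * e⁻¹ * e'⁻¹ * (e' * (e * r') * r) := by group
    _ = e * e' * e⁻¹ * e'⁻¹ * (e' * (r' * e) * r) := by rw [h4.eq]
    _ = e * e' * e⁻¹ * e'⁻¹ * (e' * r') * (e * r) := by group

lemma comm_rel' {G : Type*} [Group G] {g u s : G} (h : Commute s g) :
    g * (u * s) * g⁻¹ * (u * s)⁻¹ = g * u * g⁻¹ * u⁻¹ := by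
  rw [mul_inv_eq_iff_eq_mul, mul_inv_eq_iff_eq_mul]
  calc g * (u * s) = g * u * g⁻¹ * u⁻¹ * (u * (g * s)) := by group
    _ = g * u * g⁻¹ * u⁻¹ * (u * (s * g)) := by rw [h.eq]
    _ = g * u * g⁻¹ * u⁻¹ * (u * s) * g := by group

/-- The conjugating element. -/
def Z (p1 p2 a b : ι) (h : p1 ≠ p2) : symplecticGroup ι ℤ := E p1 p2 h 1 * Ud a 1 * Ld b 1

lemma Φ_Z (σ : Equiv.Perm ι) (p1 p2 a b : ι) (h : p1 ≠ p2) :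
    Φ σ * Z p1 p2 a b h * (Φ σ)⁻¹ = Z (σ p1) (σ p2) (σ a) (σ b) (σ.injective.ne h) := by
  unfold Z
  rw [← Φ_E σ p1 p2 h, ← Φ_Ud σ a 1, ← Φ_Ld σ b 1]
  group

section core

variable (G : Subgroup (symplecticGroup ι ℤ)) (σ τ : Equiv.Perm ι) (x : Fin 12 → ι)

lemma coreW (p1 p2 a b q1 q2 a' b' : ι) (h : p1 ≠ p2) (h' : q1 ≠ q2)
    (hσ : Φ σ ∈ G) (hM : Z p1 p2 a b h * Φ σ * (Z p1 p2 a b h)⁻¹ ∈ G)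
    (s1 : σ p1 = q1) (s2 : σ p2 = q2) (s3 : σ a = a') (s4 : σ b = b') :
    Z p1 p2 a b h * (Z q1 q2 a' b' h')⁻¹ ∈ G := by
  subst s1 s2 s3 s4
  rw [← Φ_Z σ p1 p2 a b h]
  have := mul_mem hM (inv_mem hσ)
  convert this using 1
  group

lemma coreE (hx : Function.Injective x) (hτ : Φ τ ∈ G)
    (hW : Z (x 0) (x 1) (x 6) (x 9) (hx.ne (by decide)) *
      (Z (x 3) (x 4) (x 7) (x 10) (hx.ne (by decide)))⁻¹ ∈ G)
    (t0 : τ (x 0) = x 1) (t1 : τ (x 1) = x 2) (t3 : τ (x 3) = x 3) (t4 : τ (x 4) = x 5)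
    (t6 : τ (x 6) = x 7) (t7 : τ (x 7) = x 8) (t9 : τ (x 9) = x 10) (t10 : τ (x 10) = x 11) :
    E (x 0) (x 2) (hx.ne (by decide)) 1 ∈ G := by
  have hW' : Z (x 1) (x 2) (x 7) (x 10) (hx.ne (by decide)) *
      (Z (x 3) (x 5) (x 8) (x 11) (hx.ne (by decide)))⁻¹ ∈ G := by
    have h1 := mul_mem (mul_mem hτ hW) (inv_mem hτ)
    have h2 : Φ τ * (Z (x 0) (x 1) (x 6) (x 9) (hx.ne (by decide)) *
        (Z (x 3) (x 4) (x 7) (x 10) (hx.ne (by decide)))⁻¹) * (Φ τ)⁻¹ =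
        (Φ τ * Z (x 0) (x 1) (x 6) (x 9) (hx.ne (by decide)) * (Φ τ)⁻¹) *
        (Φ τ * Z (x 3) (x 4) (x 7) (x 10) (hx.ne (by decide)) * (Φ τ)⁻¹)⁻¹ := by group
    rw [h2, Φ_Z, Φ_Z] at h1
    simpa only [t0, t1, t3, t4, t6, t7, t9, t10] using h1
  have h3 := mul_mem (mul_mem (mul_mem hW hW') (inv_mem hW)) (inv_mem hW')
  have h4 := comm_rel (e := E (x 0) (x 1) (hx.ne (by decide)) 1)
    (r := Ud (x 6) 1 * Ld (x 9) 1 * (Z (x 3) (x 4) (x 7) (x 10) (hx.ne (by decide)))⁻¹)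
    (e' := E (x 1) (x 2) (hx.ne (by decide)) 1)
    (r' := Ud (x 7) 1 * Ld (x 10) 1 * (Z (x 3) (x 5) (x 8) (x 11) (hx.ne (by decide)))⁻¹)
    (by
      unfold Z
      repeat' (with_reducible first
        | apply Commute.mul_left | apply Commute.inv_left
        | apply Commute.mul_right | apply Commute.inv_right)
      all_goals with_reducible first
        | exact E_E_comm _ _ (hx.ne (by decide)) (hx.ne (by decide)) _ _
        | exact (E_Ud_comm _ (hx.ne (by decide)) _ _).symm
        | exact (E_Ld_comm _ (hx.ne (by decide)) _ _).symm)
    (by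
      unfold Z
      repeat' (with_reducible first
        | apply Commute.mul_left | apply Commute.inv_left
        | apply Commute.mul_right | apply Commute.inv_right)
      all_goals with_reducible first
        | exact E_E_comm _ _ (hx.ne (by decide)) (hx.ne (by decide)) _ _
        | exact (E_Ud_comm _ (hx.ne (by decide)) _ _).symm
        | exact (E_Ld_comm _ (hx.ne (by decide)) _ _).symm
        | exact (E_Ud_comm _ (hx.ne (by decide)) _ _)
        | exact (E_Ld_comm _ (hx.ne (by decide)) _ _)
        | exact Ud_Ud_comm _ _
        | exact Ld_Ld_comm _ _
        | exact Ud_Ld_comm (hx.ne (by decide)) _ _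
        | exact (Ud_Ld_comm (hx.ne (by decide)) _ _).symm)
    (by
      unfold Z
      repeat' (with_reducible first
        | apply Commute.mul_left | apply Commute.inv_left
        | apply Commute.mul_right | apply Commute.inv_right)
      all_goals with_reducible first
        | exact E_E_comm _ _ (hx.ne (by decide)) (hx.ne (by decide)) _ _
        | exact (E_Ud_comm _ (hx.ne (by decide)) _ _).symm
        | exact (E_Ld_comm _ (hx.ne (by decide)) _ _).symm)
  rw [E_comm_rel _ _ (hx.ne (by decide)), one_mul] at h4
  rw [← h4]
  convert h3 using 1
  simp only [Z, mul_assoc]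

lemma sq (a : ι) : single a a (1 : ℤ) = q (Pi.single a 1) := by
  ext y z
  simp only [q, vecMulVec_apply, single_apply, Pi.single_apply]
  by_cases hy : y = a <;> by_cases hz : z = a <;> simp [hy, hz, eq_comm (a := a)]

lemma tq (a e : ι) (h : a ≠ e) : (1 + single e a (1 : ℤ)) *ᵥ Pi.single a 1 =
    Pi.single a 1 + Pi.single e 1 := by
  rw [add_mulVec, one_mulVec, single_mulVec]
  congr 1
  ext y
  by_cases hy : y = e
  · subst hy; simp
  · simp [hy]

lemma coreU (hE : ∀ i j h c, E i j h c ∈ G) (a e f : ι) (hae : a ≠ e) (haf : a ≠ f)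
    (hef : e ≠ f) (h : E e a hae.symm 1 * Ud a 1 * (E e a hae.symm 1)⁻¹ * (Ud a 1)⁻¹ ∈ G) :
    ∀ i c, Ud i c ∈ G := by
  have key := N_lemma (NU G) (by
    rintro i j hij c S ⟨hS, hSG⟩
    exact ⟨_, by rw [← E_U i j hij c S hS]; exact mul_mem (mul_mem (hE _ _ _ _) hSG) (inv_mem (hE _ _ _ _))⟩)
    a e f hae haf hef (by
      unfold Ud at h
      rw [E_U, U_inv, U_add] at h
      refine ⟨?_, ?_⟩
      · simp [q, sub_eq_add_neg]
      · convert h using 2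
        rw [sq, conj_q, tq a e hae, sub_eq_add_neg])
  intro i c
  obtain ⟨h1, h2⟩ := (NU G).zsmul_mem (key i) c
  unfold Ud
  convert h2 using 2
  simp

lemma coreL (hE : ∀ i j h c, E i j h c ∈ G) (a e f : ι) (hae : a ≠ e) (haf : a ≠ f)
    (hef : e ≠ f) (h : E a e hae (-1) * Ld a 1 * (E a e hae (-1))⁻¹ * (Ld a 1)⁻¹ ∈ G) :
    ∀ i c, Ld i c ∈ G := by
  have key := N_lemma (NL G) (by
    rintro i j hij c S ⟨hS, hSG⟩
    exact ⟨by simp [hS, Matrix.mul_assoc], by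
      have h1 := mul_mem (mul_mem (hE j i hij.symm (-c)) hSG) (inv_mem (hE j i hij.symm (-c)))
      rw [E_L] at h1
      simpa only [neg_neg] using h1⟩)
    a e f hae haf hef (by
      unfold Ld at h
      rw [E_L, L_inv, L_add] at h
      refine ⟨?_, ?_⟩
      · simp [q, sub_eq_add_neg]
      · convert h using 2
        rw [neg_neg, sq, conj_q, tq a e hae, sub_eq_add_neg])
  intro i c
  obtain ⟨h1, h2⟩ := (NL G).zsmul_mem (key i) c
  unfold Ld
  convert h2 using 2
  simp

lemma coreUL (hx : Function.Injective x) (hE : ∀ i j h c, E i j h c ∈ G)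
    (hW : Z (x 0) (x 1) (x 6) (x 9) (hx.ne (by decide)) *
      (Z (x 3) (x 4) (x 7) (x 10) (hx.ne (by decide)))⁻¹ ∈ G) : G = ⊤ := by
  apply gen G hE
  · apply coreU G hE (x 6) (x 8) (x 0) (hx.ne (by decide)) (hx.ne (by decide)) (hx.ne (by decide))
    have hg := hE (x 8) (x 6) (hx.ne (by decide)) 1
    have h1 := mul_mem (mul_mem (mul_mem hg hW) (inv_mem hg)) (inv_mem hW)
    rw [← comm_rel' (s := E (x 0) (x 1) (hx.ne (by decide)) 1 * Ld (x 9) 1 *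
      (Z (x 3) (x 4) (x 7) (x 10) (hx.ne (by decide)))⁻¹)]
    · have h2 : Ud (x 6) 1 * (E (x 0) (x 1) (hx.ne (by decide)) 1 * Ld (x 9) 1 *
          (Z (x 3) (x 4) (x 7) (x 10) (hx.ne (by decide)))⁻¹) =
          Z (x 0) (x 1) (x 6) (x 9) (hx.ne (by decide)) *
          (Z (x 3) (x 4) (x 7) (x 10) (hx.ne (by decide)))⁻¹ := by
        rw [← mul_assoc, ← mul_assoc, ← (E_Ud_comm _ (hx.ne (by decide)) _ _).eq]
        simp only [Z, mul_assoc]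
      rw [h2]
      exact h1
    · unfold Z
      repeat' (with_reducible first
        | apply Commute.mul_left | apply Commute.inv_left
        | apply Commute.mul_right | apply Commute.inv_right)
      all_goals with_reducible first
        | exact E_E_comm _ _ (hx.ne (by decide)) (hx.ne (by decide)) _ _
        | exact (E_Ud_comm _ (hx.ne (by decide)) _ _).symm
        | exact (E_Ld_comm _ (hx.ne (by decide)) _ _).symm
  · apply coreL G hE (x 9) (x 11) (x 0) (hx.ne (by decide)) (hx.ne (by decide)) (hx.ne (by decide))
    have hg := hE (x 9) (x 11) (hx.ne (by decide)) (-1)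
    have h1 := mul_mem (mul_mem (mul_mem hg hW) (inv_mem hg)) (inv_mem hW)
    rw [← comm_rel' (s := E (x 0) (x 1) (hx.ne (by decide)) 1 * Ud (x 6) 1 *
      (Z (x 3) (x 4) (x 7) (x 10) (hx.ne (by decide)))⁻¹)]
    · have h2 : Ld (x 9) 1 * (E (x 0) (x 1) (hx.ne (by decide)) 1 * Ud (x 6) 1 *
          (Z (x 3) (x 4) (x 7) (x 10) (hx.ne (by decide)))⁻¹) =
          Z (x 0) (x 1) (x 6) (x 9) (hx.ne (by decide)) *
          (Z (x 3) (x 4) (x 7) (x 10) (hx.ne (by decide)))⁻¹ := by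
        have h3 : Commute (E (x 0) (x 1) (hx.ne (by decide)) 1 * Ud (x 6) 1) (Ld (x 9) 1) :=
          Commute.mul_left (E_Ld_comm _ (hx.ne (by decide)) _ _)
            (Ud_Ld_comm (hx.ne (by decide)) _ _)
        rw [← mul_assoc, ← h3.eq]
        simp only [Z, mul_assoc]
      rw [h2]
      exact h1
    · unfold Z
      repeat' (with_reducible first
        | apply Commute.mul_left | apply Commute.inv_left
        | apply Commute.mul_right | apply Commute.inv_right)
      all_goals with_reducible first
        | exact E_E_comm _ _ (hx.ne (by decide)) (hx.ne (by decide)) _ _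
        | exact (E_Ud_comm _ (hx.ne (by decide)) _ _).symm
        | exact (E_Ld_comm _ (hx.ne (by decide)) _ _).symm

end core

/-- `E i j 1 ∈ G` or `i = j`. -/
def R (G : Subgroup (symplecticGroup ι ℤ)) (i j : ι) : Prop := ∀ h : i ≠ j, E i j h 1 ∈ G

lemma R_trans {G : Subgroup (symplecticGroup ι ℤ)} {i j k : ι} (h1 : R G i j) (h2 : R G j k) :
    R G i k := by
  intro h
  by_cases hij : i = j
  · subst hij; exact h2 h
  by_cases hjk : j = k
  · subst hjk; exact h1 h
  have h3 := E_comm_rel hij hjk h 1 1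
  rw [mul_one] at h3
  rw [← h3]
  exact mul_mem (mul_mem (mul_mem (h1 hij) (h2 hjk)) (inv_mem (h1 hij))) (inv_mem (h2 hjk))

lemma R_perm {G : Subgroup (symplecticGroup ι ℤ)} {σ : Equiv.Perm ι} (hσ : Φ σ ∈ G) {i j : ι}
    (h1 : R G i j) : R G (σ i) (σ j) := by
  intro h
  have hij : i ≠ j := by rintro rfl; exact h rfl
  rw [← Φ_E σ i j hij]
  exact mul_mem (mul_mem hσ (h1 hij)) (inv_mem hσ)

lemma R_all {G : Subgroup (symplecticGroup ι ℤ)} (h : ∀ i j, R G i j) :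
    ∀ i j h c, E i j h c ∈ G := by
  intro i j hij c
  have h1 : ∀ m : ℕ, E i j hij m ∈ G := by
    intro m
    induction m with
    | zero => rw [Nat.cast_zero, E_zero]; exact one_mem _
    | succ m ih =>
      rw [Nat.cast_succ, ← E_add]
      exact mul_mem ih (h i j hij)
  rcases Int.eq_nat_or_neg c with ⟨m, rfl | rfl⟩
  · exact h1 m
  · rw [← E_inv]; exact inv_mem (h1 m)

/-- The function underlying the `j`-th power of a product of `m` consecutive `k`-cycles starting
at `p`. -/
def cf (k p m j x : ℕ) : ℕ :=
  if p ≤ x ∧ x < p + m * k then p + (x - p) / k * k + ((x - p) % k + j) % k else x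

lemma cf_in {k p m x : ℕ} (hk : 0 < k) (j : ℕ) (h : p ≤ x ∧ x < p + m * k) :
    p ≤ cf k p m j x ∧ cf k p m j x < p + m * k ∧ (cf k p m j x - p) / k = (x - p) / k ∧
      (cf k p m j x - p) % k = ((x - p) % k + j) % k := by
  have h0 : cf k p m j x = p + ((x - p) / k * k + ((x - p) % k + j) % k) := by
    rw [cf, if_pos h, add_assoc]
  have h1 : ((x - p) % k + j) % k < k := Nat.mod_lt _ hk
  have h2 : (x - p) / k < m := by
    rw [Nat.div_lt_iff_lt_mul hk]; omega
  have h3 : (x - p) / k * k + k ≤ m * k := by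
    have := Nat.mul_le_mul_right k h2
    rw [Nat.succ_mul] at this
    exact this
  refine ⟨by omega, by omega, ?_, ?_⟩
  · rw [h0, Nat.add_sub_cancel_left, add_comm, Nat.add_mul_div_right _ _ hk, Nat.div_eq_of_lt h1,
      zero_add]
  · rw [h0, Nat.add_sub_cancel_left, add_comm, Nat.add_mul_mod_self_right, Nat.mod_mod]

lemma cf_cf {k p m : ℕ} (hk : 0 < k) (i j x : ℕ) :
    cf k p m i (cf k p m j x) = cf k p m (j + i) x := by
  by_cases h : p ≤ x ∧ x < p + m * k
  · obtain ⟨h1, h2, h3, h4⟩ := cf_in hk j h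
    rw [cf, if_pos ⟨h1, h2⟩, h3, h4, cf, if_pos h, Nat.mod_add_mod, add_assoc ((x - p) % k)]
  · rw [cf, cf, if_neg h, if_neg h, cf, if_neg h]

lemma cf_k {k p m : ℕ} (x j : ℕ) (hj : j % k = 0) : cf k p m j x = x := by
  unfold cf
  split_ifs with h
  · rw [Nat.add_mod, hj, add_zero, Nat.mod_mod, Nat.mod_mod, add_assoc, mul_comm,
      Nat.div_add_mod]
    omega
  · rfl

/-- A product of `m` consecutive `k`-cycles starting at `p`. -/
def cyc {n : ℕ} (k p m : ℕ) (hk : 0 < k) (h : p + m * k ≤ n) : Equiv.Perm (Fin n) where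
  toFun x := ⟨cf k p m 1 x, by
    by_cases hx : p ≤ x.1 ∧ x.1 < p + m * k
    · exact lt_of_lt_of_le (cf_in hk 1 hx).2.1 h
    · rw [cf, if_neg hx]; exact x.2⟩
  invFun x := ⟨cf k p m (k - 1) x, by
    by_cases hx : p ≤ x.1 ∧ x.1 < p + m * k
    · exact lt_of_lt_of_le (cf_in hk _ hx).2.1 h
    · rw [cf, if_neg hx]; exact x.2⟩
  left_inv x := by
    apply Fin.ext
    simp only
    rw [cf_cf hk, cf_k]
    rw [Nat.add_sub_cancel' hk, Nat.mod_self]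
  right_inv x := by
    apply Fin.ext
    simp only
    rw [cf_cf hk, cf_k]
    rw [Nat.sub_add_cancel hk, Nat.mod_self]

lemma cyc_pow {n : ℕ} (k p m : ℕ) (hk : 0 < k) (h : p + m * k ≤ n) (j : ℕ) (x : Fin n) :
    ((cyc k p m hk h ^ j) x).1 = cf k p m j x := by
  induction j with
  | zero => rw [pow_zero, cf_k _ _ (Nat.zero_mod k)]; rfl
  | succ j ih =>
    rw [pow_succ', Equiv.Perm.mul_apply]
    change cf k p m 1 ((cyc k p m hk h ^ j) x).1 = _
    rw [ih, cf_cf hk]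

lemma cyc_order {n : ℕ} (k p m : ℕ) (hk : 0 < k) (hm : 0 < m) (h : p + m * k ≤ n) :
    orderOf (cyc k p m hk h) = k := by
  rw [orderOf_eq_iff hk]
  have hmk : k ≤ m * k := Nat.le_mul_of_pos_left k hm
  constructor
  · ext x
    rw [cyc_pow, cf_k _ _ (Nat.mod_self k)]
    rfl
  · intro j hj hj0 heq
    have h1 := cyc_pow k p m hk h j ⟨p, by omega⟩
    rw [heq, cf, if_pos ⟨le_rfl, by simp; omega⟩] at h1
    simp [Nat.mod_eq_of_lt hj] at h1
    omega

/-- `x ↦ x + 1` inside a cycle. -/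
lemma cyc_succ {n : ℕ} (k p m : ℕ) (hk : 0 < k) (h : p + m * k ≤ n) (t r : ℕ) (ht : t < m)
    (hr : r + 1 < k) (x y : Fin n) (hx : x.1 = p + t * k + r) (hy : y.1 = x.1 + 1) :
    cyc k p m hk h x = y := by
  apply Fin.ext
  change cf k p m 1 x = y
  have h3 : t * k + k ≤ m * k := by
    have := Nat.mul_le_mul_right k ht
    rw [Nat.succ_mul] at this
    exact this
  have h4 : x.1 - p = r + t * k := by omega
  rw [cf, if_pos ⟨by omega, by omega⟩, h4, Nat.add_mul_div_right _ _ hk,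
    Nat.add_mul_mod_self_right, Nat.div_eq_of_lt (by omega), Nat.mod_eq_of_lt (a := r) (by omega),
    Nat.mod_eq_of_lt hr, zero_add]
  omega

/-- The last element of a cycle goes to the first. -/
lemma cyc_last {n : ℕ} (k p m : ℕ) (hk : 0 < k) (h : p + m * k ≤ n) (t : ℕ) (ht : t < m)
    (x y : Fin n) (hx : x.1 + 1 = p + t * k + k) (hy : y.1 = p + t * k) :
    cyc k p m hk h x = y := by
  apply Fin.ext
  change cf k p m 1 x = y
  have h3 : t * k + k ≤ m * k := by
    have := Nat.mul_le_mul_right k ht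
    rw [Nat.succ_mul] at this
    exact this
  have h4 : x.1 - p = (k - 1) + t * k := by omega
  rw [cf, if_pos ⟨by omega, by omega⟩, h4, Nat.add_mul_div_right _ _ hk,
    Nat.add_mul_mod_self_right, Nat.div_eq_of_lt (by omega), Nat.mod_eq_of_lt (a := k - 1) (by omega),
    Nat.sub_add_cancel hk, Nat.mod_self, zero_add]
  omega

lemma cyc_fix {n : ℕ} (k p m : ℕ) (hk : 0 < k) (h : p + m * k ≤ n) (x : Fin n) (hx : x.1 < p) :
    cyc k p m hk h x = x := by
  apply Fin.ext
  change cf k p m 1 x = x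
  rw [cf, if_neg (by omega)]

end SpGen

end


section

open Matrix

namespace SpGen

/-- The twelve points used by the commutator computations. -/
def pt (k : ℕ) : Fin 12 → ℕ :=
  ![k - 1, k, 1, 0, k + 1, k + 2, 2 * k + 1, 2 * k + 2, 2 * k + 3, k + 3, k + 4, k + 5]

lemma pt_lt {k n : ℕ} (hk : 5 ≤ k) (hn : 3 * k + 1 ≤ n) (i : Fin 12) : pt k i < n := by
  fin_cases i <;> simp [pt] <;> omega

lemma pt_inj {k : ℕ} (hk : 5 ≤ k) : Function.Injective (pt k) := by
  intro i j h
  fin_cases i <;> fin_cases j <;> simp [pt] at h ⊢ <;> omega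

lemma main_gen {k n : ℕ} (hk : 5 ≤ k) (hn : 3 * k + 1 ≤ n)
    (σ τ ρ : Equiv.Perm (Fin n)) (G : Subgroup (symplecticGroup (Fin n) ℤ))
    (hk0 : 0 < k) (h1 : 0 + n / k * k ≤ n) (h2 : 1 + (n - 1) / k * k ≤ n)
    (h3 : (n - k) + 1 * k ≤ n)
    (eσ : σ = cyc k 0 (n / k) hk0 h1) (eτ : τ = cyc k 1 ((n - 1) / k) hk0 h2)
    (eρ : ρ = cyc k (n - k) 1 hk0 h3)
    (x : Fin 12 → Fin n) (hxv : ∀ i, (x i).1 = pt k i) (hx : Function.Injective x)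
    (hσ : Φ σ ∈ G) (hτ : Φ τ ∈ G) (hρ : Φ ρ ∈ G)
    (hM : Z (x 0) (x 1) (x 6) (x 9) (hx.ne (by decide)) * Φ σ *
      (Z (x 0) (x 1) (x 6) (x 9) (hx.ne (by decide)))⁻¹ ∈ G) : G = ⊤ := by
  have q1 : 3 ≤ n / k := by rw [Nat.le_div_iff_mul_le hk0]; omega
  have q2 : 3 ≤ (n - 1) / k := by rw [Nat.le_div_iff_mul_le hk0]; omega
  have v0 : (x 0).1 = k - 1 := hxv 0
  have v1 : (x 1).1 = k := hxv 1
  have v2 : (x 2).1 = 1 := hxv 2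
  have v3 : (x 3).1 = 0 := hxv 3
  have v4 : (x 4).1 = k + 1 := hxv 4
  have v5 : (x 5).1 = k + 2 := hxv 5
  have v6 : (x 6).1 = 2 * k + 1 := hxv 6
  have v7 : (x 7).1 = 2 * k + 2 := hxv 7
  have v8 : (x 8).1 = 2 * k + 3 := hxv 8
  have v9 : (x 9).1 = k + 3 := hxv 9
  have v10 : (x 10).1 = k + 4 := hxv 10
  have v11 : (x 11).1 = k + 5 := hxv 11
  have sσ : ∀ t r : ℕ, t < n / k → r + 1 < k → ∀ a b : Fin n, a.1 = t * k + r →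
      b.1 = a.1 + 1 → σ a = b := by
    intro t r ht hr a b ha hb
    rw [eσ]
    exact cyc_succ k 0 _ hk0 h1 t r ht hr a b (by omega) hb
  have sτ : ∀ t r : ℕ, t < (n - 1) / k → r + 1 < k → ∀ a b : Fin n, a.1 = 1 + t * k + r →
      b.1 = a.1 + 1 → τ a = b := by
    intro t r ht hr a b ha hb
    rw [eτ]
    exact cyc_succ k 1 _ hk0 h2 t r ht hr a b ha hb
  have σ0 : σ (x 0) = x 3 := by
    rw [eσ]; exact cyc_last k 0 _ hk0 h1 0 (by omega) _ _ (by omega) (by omega)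
  have τ1 : τ (x 1) = x 2 := by
    rw [eτ]; exact cyc_last k 1 _ hk0 h2 0 (by omega) _ _ (by omega) (by omega)
  have τ3 : τ (x 3) = x 3 := by
    rw [eτ]; exact cyc_fix k 1 _ hk0 h2 _ (by omega)
  have ρ3 : ρ (x 3) = x 3 := by
    rw [eρ]; exact cyc_fix k _ _ hk0 h3 _ (by omega)
  have σ3 : σ (x 3) = x 2 := sσ 0 0 (by omega) (by omega) _ _ (by omega) (by omega)
  have τ0 : τ (x 0) = x 1 := sτ 0 (k - 2) (by omega) (by omega) _ _ (by omega) (by omega)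
  have hW := coreW G σ (x 0) (x 1) (x 6) (x 9) (x 3) (x 4) (x 7) (x 10) (hx.ne (by decide))
    (hx.ne (by decide)) hσ hM σ0
    (sσ 1 0 (by omega) (by omega) _ _ (by omega) (by omega))
    (sσ 2 1 (by omega) (by omega) _ _ (by omega) (by omega))
    (sσ 1 3 (by omega) (by omega) _ _ (by omega) (by omega))
  have hE := coreE G τ x hx hτ hW τ0 τ1 τ3
    (sτ 1 0 (by omega) (by omega) _ _ (by omega) (by omega))
    (sτ 2 0 (by omega) (by omega) _ _ (by omega) (by omega))
    (sτ 2 1 (by omega) (by omega) _ _ (by omega) (by omega))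
    (sτ 1 2 (by omega) (by omega) _ _ (by omega) (by omega))
    (sτ 1 3 (by omega) (by omega) _ _ (by omega) (by omega))
  have r0 : R G (x 0) (x 2) := fun _ => hE
  -- from `0` to `2, …, k`
  have r1 : ∀ j : ℕ, ∀ b : Fin n, b.1 = j + 2 → j + 2 ≤ k → R G (x 3) b := by
    intro j
    induction j with
    | zero =>
      intro b hb _
      have h := R_perm hσ r0
      rwa [σ0, sσ 0 1 (by omega) (by omega) (x 2) b (by omega) (by omega)] at h
    | succ j ih =>
      intro b hb hjk
      have h := R_perm hτ (ih ⟨j + 2, by omega⟩ rfl (by omega))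
      rwa [τ3, sτ 0 (j + 1) (by omega) (by omega) _ b (by simp; omega) (by simp; omega)] at h
  have r2 : R G (x 3) (x 2) := by
    have h := R_perm hτ (r1 (k - 2) (x 1) (by omega) (by omega))
    rwa [τ3, τ1] at h
  have r3 : R G (x 2) (x 3) := by
    have h := R_perm (σ := σ⁻¹) (by rw [map_inv]; exact inv_mem hσ) r2
    have e1 : σ⁻¹ (x 2) = x 3 := Equiv.Perm.inv_eq_iff_eq.mpr σ3.symm
    have e2 : σ⁻¹ (x 3) = x 0 := Equiv.Perm.inv_eq_iff_eq.mpr σ0.symm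
    rw [e1, e2] at h
    have h' := R_perm hτ (R_perm hτ h)
    rwa [τ3, τ3, τ0, τ1] at h'
  have step : ∀ a b : Fin n, b.1 = a.1 + 1 → ∃ g : Equiv.Perm (Fin n), Φ g ∈ G ∧ g a = b ∧
      (g (x 3) = x 3 ∨ g (x 3) = x 2) := by
    intro a b hb
    have d1 := Nat.div_add_mod a.1 k
    have d2 := Nat.mod_lt a.1 hk0
    have bl := b.2
    rw [mul_comm] at d1
    by_cases ha : a.1 / k < n / k
    · by_cases hr : a.1 % k + 1 < k
      · exact ⟨σ, hσ, sσ _ _ ha hr _ _ d1.symm hb, Or.inr σ3⟩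
      · refine ⟨τ, hτ, sτ (a.1 / k) (k - 2) ?_ (by omega) _ _ (by omega) hb, Or.inl τ3⟩
        rw [Nat.lt_iff_add_one_le, Nat.le_div_iff_mul_le hk0, Nat.succ_mul]
        omega
    · have d3 := Nat.div_add_mod n k
      have d4 := Nat.mod_lt n hk0
      have d5 : n / k * k ≤ a.1 / k * k := Nat.mul_le_mul_right k (by omega)
      rw [mul_comm] at d3
      refine ⟨ρ, hρ, ?_, Or.inl ρ3⟩
      rw [eρ]
      exact cyc_succ k _ _ hk0 h3 0 (a.1 - (n - k)) (by omega) (by omega) a b (by omega) hb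
  have r4 : ∀ j : ℕ, ∀ b : Fin n, b.1 = j → R G (x 3) b ∧ R G b (x 3) := by
    intro j
    induction j with
    | zero =>
      intro b hb
      have : b = x 3 := Fin.ext (by omega)
      subst this
      exact ⟨fun h => absurd rfl h, fun h => absurd rfl h⟩
    | succ j ih =>
      intro b hb
      have bl := b.2
      obtain ⟨i1, i2⟩ := ih ⟨j, by omega⟩ rfl
      obtain ⟨g, hg, hgb, hg3⟩ := step ⟨j, by omega⟩ b hb
      have i3 := R_perm hg i1
      have i4 := R_perm hg i2
      rw [hgb] at i3 i4
      rcases hg3 with h | h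
      · rw [h] at i3 i4; exact ⟨i3, i4⟩
      · rw [h] at i3 i4; exact ⟨R_trans r2 i3, R_trans i4 r3⟩
  have r5 := R_all (G := G) fun i j => R_trans (r4 i i rfl).2 (r4 j j rfl).1
  exact coreUL G x hx r5 hW

lemma orderOf_conj_eq {G : Type*} [Group G] (z g : G) : orderOf (z * g * z⁻¹) = orderOf g :=
  orderOf_injective (MulAut.conj z).toMonoidHom (MulAut.conj z).injective g

lemma final (k n : ℕ) (hk : 5 ≤ k) (hn : 2 * (k - 1) * (k - 3) ≤ n) :
    ∃ M₁ M₂ M₃ M₄ : symplecticGroup (Fin n) ℤ,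
      orderOf M₁ = k ∧ orderOf M₂ = k ∧ orderOf M₃ = k ∧ orderOf M₄ = k ∧
      Subgroup.closure {M₁, M₂, M₃, M₄} = ⊤ := by
  have hn' : 3 * k + 1 ≤ n := by
    have := Nat.mul_le_mul_left (2 * (k - 1)) (show 2 ≤ k - 3 by omega)
    omega
  have hk0 : 0 < k := by omega
  have h1 : 0 + n / k * k ≤ n := by rw [zero_add]; exact Nat.div_mul_le_self n k
  have h2 : 1 + (n - 1) / k * k ≤ n := by
    have := Nat.div_mul_le_self (n - 1) k
    omega
  have h3 : (n - k) + 1 * k ≤ n := by omega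
  have q1 : 0 < n / k := Nat.div_pos (by omega) hk0
  have q2 : 0 < (n - 1) / k := Nat.div_pos (by omega) hk0
  let x : Fin 12 → Fin n := fun i => ⟨pt k i, pt_lt hk hn' i⟩
  have hx : Function.Injective x := fun i j h => pt_inj hk (congrArg Fin.val h)
  have oΦ : ∀ g : Equiv.Perm (Fin n), orderOf (Φ g) = orderOf g :=
    orderOf_injective Φ Φ_injective
  refine ⟨Φ (cyc k 0 (n / k) hk0 h1), Φ (cyc k 1 ((n - 1) / k) hk0 h2),
    Z (x 0) (x 1) (x 6) (x 9) (hx.ne (by decide)) * Φ (cyc k 0 (n / k) hk0 h1) *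
      (Z (x 0) (x 1) (x 6) (x 9) (hx.ne (by decide)))⁻¹, Φ (cyc k (n - k) 1 hk0 h3),
    ?_, ?_, ?_, ?_, ?_⟩
  · rw [oΦ, cyc_order _ _ _ _ q1]
  · rw [oΦ, cyc_order _ _ _ _ q2]
  · rw [orderOf_conj_eq, oΦ, cyc_order _ _ _ _ q1]
  · rw [oΦ, cyc_order _ _ _ _ one_pos]
  · refine main_gen hk hn' _ _ _ _ hk0 h1 h2 h3 rfl rfl rfl x (fun _ => rfl) hx ?_ ?_ ?_ ?_
    · exact Subgroup.subset_closure (Or.inl rfl)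
    · exact Subgroup.subset_closure (Or.inr (Or.inl rfl))
    · exact Subgroup.subset_closure (Or.inr (Or.inr (Or.inr rfl)))
    · exact Subgroup.subset_closure (Or.inr (Or.inr (Or.inl rfl)))

end SpGen

end

/-- For `k ≥ 5` and `n ≥ 2(k - 1)(k - 3)`, the integral symplectic group
`Sp(2n, ℤ)` is generated by four elements of order exactly `k`. -/
theorem Sp_2n_Z_generated_by_four_elements_of_order_k
    (k n : ℕ) (hk : 5 ≤ k) (hn : 2 * (k - 1) * (k - 3) ≤ n) :
    ∃ M₁ M₂ M₃ M₄ : Matrix.symplecticGroup (Fin n) ℤ,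
      orderOf M₁ = k ∧ orderOf M₂ = k ∧ orderOf M₃ = k ∧ orderOf M₄ = k ∧
      Subgroup.closure {M₁, M₂, M₃, M₄} = ⊤ :=
  SpGen.final k n hk hn
end
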